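/- arXiv:2212.02554 — 3 statements merged into one kernel-verified Lean document; each statement's English description precedes it below -/
import Mathlib

section
/- Let R be a commutative Noetherian ring and let i : M → I be a morphism of R-modules. Then the following are equivalent: (1) i is an injective envelope; (2) the morphism Hom_R(i,E) : Hom_R(I,E) → Hom_R(M,E) is a flat cover for some injective cogenerator E; (3) the morphism Hom_R(i,E) is a flat cover for every injective R-module E. -/
universe u

variable (R : Type u) [CommRing R]

/-- A morphism `f : F → M` with `F` flat is a flat precover if every morphism from a
flat module to `M` factors through `f`. -/
def IsFlatPrecover {F M : Type u} [AddCommGroup F] [AddCommGroup M] [Module R F]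
    [Module R M] (f : F →ₗ[R] M) : Prop :=
  Module.Flat R F ∧
    ∀ (F' : Type u) [AddCommGroup F'] [Module R F'], Module.Flat R F' →
      ∀ g : F' →ₗ[R] M, ∃ h : F' →ₗ[R] F, f ∘ₗ h = g

/-- A flat precover `f : F → M` is a flat cover if every `h : F → F` with `f ∘ h = f`
is an automorphism. -/
def IsFlatCover {F M : Type u} [AddCommGroup F] [AddCommGroup M] [Module R F]
    [Module R M] (f : F →ₗ[R] M) : Prop :=
  IsFlatPrecover R f ∧ ∀ h : F →ₗ[R] F, f ∘ₗ h = f → Function.Bijective h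

/-- A morphism `i : M → E` is an injective envelope if `E` is injective, `i` is
injective, and the image of `i` is an essential submodule of `E`. -/
def IsInjectiveEnvelope {M E : Type u} [AddCommGroup M] [AddCommGroup E] [Module R M]
    [Module R E] (i : M →ₗ[R] E) : Prop :=
  Module.Injective R E ∧ Function.Injective i ∧
    ∀ N : Submodule R E, N ≠ ⊥ → N ⊓ LinearMap.range i ≠ ⊥

/-- An injective cogenerator is an injective module `E` such that `Hom(N, E) ≠ 0`
for every nonzero module `N`. -/
def IsInjectiveCogenerator (E : Type u) [AddCommGroup E] [Module R E] : Prop :=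
  Module.Injective R E ∧
    ∀ (N : Type u) [AddCommGroup N] [Module R N], (∃ x : N, x ≠ 0) →
      ∃ g : N →ₗ[R] E, g ≠ 0

/-!
For `E` injective and `P` finitely presented, `P ⊗ Hom(I, E)` is `Hom(Hom(P, I), E)`. Testing
against the inclusions of ideals, `Hom(I, E)` is flat when `I` is injective, and conversely when
`E` is a cogenerator.

If `i` has essential image, an endomorphism `h` of `Hom(I, E)` over `Hom(M, E)` is a pure
monomorphism: an element of `P ⊗ Hom(I, E)` is a functional on `Hom(P, I)`, and one killed by
`P ⊗ h` is shown to vanish at `x : P → I` by Noetherian induction on `x⁻¹(i(M))`. Purity gives `h`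
a retraction, which can be chosen over `Hom(M, E)`, hence is itself injective.

For an injective cogenerator `E`, if `N ⊆ I` meets `i(M)` trivially, then `i` extends along
`M → I / N` to some `e`, and `I → I / N → I` induces an endomorphism of the cover `Hom(I, E)`,
forcing `N = 0`.
-/

open TensorProduct

section

variable {R} {P Q N A B C F F' : Type*} [AddCommGroup P] [AddCommGroup Q] [AddCommGroup N]
  [AddCommGroup A] [AddCommGroup B] [AddCommGroup C] [AddCommGroup F] [AddCommGroup F']
  [Module R P] [Module R Q] [Module R N] [Module R A] [Module R B] [Module R C] [Module R F]
  [Module R F']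

theorem lTensor_rTensor_apply_comm (φ : P →ₗ[R] Q) (h : F →ₗ[R] F') (t : P ⊗[R] F) :
    h.lTensor Q (φ.rTensor F t) = φ.rTensor F' (h.lTensor P t) := by
  rw [← LinearMap.comp_apply, ← LinearMap.comp_apply, LinearMap.lTensor_comp_rTensor,
    LinearMap.rTensor_comp_lTensor]

theorem lTensor_injective_of_forall_fg {h : F →ₗ[R] F'}
    (hfg : ∀ K : Submodule R N, K.FG → Function.Injective (h.lTensor K)) :
    Function.Injective (h.lTensor N) := by
  refine (injective_iff_map_eq_zero _).mpr fun t ht ↦ ?_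
  obtain ⟨K, hK, s, rfl⟩ := Submodule.exists_fg_le_eq_rTensor_subtype t
  rw [lTensor_rTensor_apply_comm] at ht
  obtain ⟨L, hKL, hL, hs⟩ := TensorProduct.eq_zero_of_fg_of_subtype_eq_zero hK ht
  rw [← lTensor_rTensor_apply_comm, map_eq_zero_iff _ (hfg L hL)] at hs
  rw [← Submodule.subtype_comp_inclusion K L hKL, LinearMap.rTensor_comp_apply, hs, map_zero]

section InjectiveTarget

variable {E : Type u} [AddCommGroup E] [Module R E] [Module.Injective R E]

variable (E) in
theorem lcomp_surjective_of_injective {f : A →ₗ[R] B} (hf : Function.Injective f) :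
    Function.Surjective (LinearMap.lcomp R E f) :=
  Module.Injective.extension_property R E A B f hf

variable (E) in
theorem lcomp_exact_of_exact {f : A →ₗ[R] B} {g : B →ₗ[R] C} (hfg : Function.Exact f g) :
    Function.Exact (LinearMap.lcomp R E g) (LinearMap.lcomp R E f) := by
  refine LinearMap.exact_of_comp_eq_zero_of_ker_le_range ?_ fun φ hφ ↦ ?_
  · ext φ a
    simp [hfg.apply_apply_eq_zero]
  have hker : LinearMap.ker g ≤ LinearMap.ker φ := by
    rw [hfg.linearMap_ker_eq]
    exact LinearMap.range_le_ker_iff.mpr hφ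
  obtain ⟨ψ, hψ⟩ := lcomp_surjective_of_injective E
    (LinearMap.ker_eq_bot.mp (Submodule.ker_liftQ_eq_bot _ g le_rfl le_rfl))
    ((LinearMap.ker g).liftQ φ hker)
  exact ⟨ψ, LinearMap.ext fun b ↦ LinearMap.congr_fun hψ (Submodule.Quotient.mk b)⟩

theorem exists_lcomp_comp_eq_of_lTensor_injective {i : A →ₗ[R] B}
    (hi : Function.Injective (i.lTensor F)) (g : F →ₗ[R] A →ₗ[R] E) :
    ∃ g' : F →ₗ[R] B →ₗ[R] E, LinearMap.lcomp R E i ∘ₗ g' = g := by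
  obtain ⟨e, he⟩ := lcomp_surjective_of_injective E hi (TensorProduct.lift g)
  refine ⟨TensorProduct.curry e, ?_⟩
  ext x a
  simpa using LinearMap.congr_fun he (x ⊗ₜ a)

end InjectiveTarget

section TensorHomEval

variable {I : Type*} {E : Type u} [AddCommGroup I] [AddCommGroup E] [Module R I] [Module R E]

variable (R P I E) in
/-- The canonical map `P ⊗ Hom(I, E) → Hom(Hom(P, I), E)` sending `p ⊗ f` to `g ↦ f (g p)`. It is
an isomorphism for `P` finitely presented and `E` injective, which translates tensoring with
`Hom(I, E)` into statements about homomorphisms to `I`. -/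
noncomputable def tensorHomEval : P ⊗[R] (I →ₗ[R] E) →ₗ[R] (P →ₗ[R] I) →ₗ[R] E :=
  TensorProduct.lift ((LinearMap.llcomp R (P →ₗ[R] I) I E).flip ∘ₗ LinearMap.applyₗ)

@[simp]
theorem tensorHomEval_tmul (p : P) (f : I →ₗ[R] E) (g : P →ₗ[R] I) :
    tensorHomEval R P I E (p ⊗ₜ f) g = f (g p) := rfl

theorem lcomp_lcomp_comp_tensorHomEval (φ : P →ₗ[R] Q) :
    LinearMap.lcomp R E (LinearMap.lcomp R I φ) ∘ₗ tensorHomEval R P I E =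
      tensorHomEval R Q I E ∘ₗ φ.rTensor (I →ₗ[R] E) := by
  ext p f g
  simp

theorem tensorHomEval_rTensor (φ : P →ₗ[R] Q) (t : P ⊗[R] (I →ₗ[R] E)) (g : Q →ₗ[R] I) :
    tensorHomEval R Q I E (φ.rTensor _ t) g = tensorHomEval R P I E t (g ∘ₗ φ) :=
  (LinearMap.congr_fun (LinearMap.congr_fun (lcomp_lcomp_comp_tensorHomEval φ) t) g).symm

variable (P I E) in
theorem tensorHomEval_bijective_of_free [Module.Free R P] [Module.Finite R P] :
    Function.Bijective (tensorHomEval R P I E) := by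
  let b := Module.Free.chooseBasis R P
  let inv : ((P →ₗ[R] I) →ₗ[R] E) →ₗ[R] P ⊗[R] (I →ₗ[R] E) :=
    ∑ j, TensorProduct.mk R P (I →ₗ[R] E) (b j) ∘ₗ
      LinearMap.lcomp R E (LinearMap.smulRightₗ (b.coord j))
  have left_inv : inv ∘ₗ tensorHomEval R P I E = LinearMap.id := by
    ext p f
    have hcoord (j) : LinearMap.lcomp R E (LinearMap.smulRightₗ (b.coord j))
        (tensorHomEval R P I E (p ⊗ₜ f)) = b.repr p j • f := by
      ext x
      simp
    simp only [inv, LinearMap.sum_apply, TensorProduct.AlgebraTensorModule.curry_apply,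
      TensorProduct.curry_apply, LinearMap.coe_restrictScalars, LinearMap.comp_apply, hcoord,
      TensorProduct.mk_apply, LinearMap.id_apply, ← TensorProduct.smul_tmul,
      ← TensorProduct.sum_tmul, b.sum_repr]
  have right_inv : tensorHomEval R P I E ∘ₗ inv = LinearMap.id := by
    ext φ g
    have hg : ∑ j, LinearMap.smulRightₗ (b.coord j) (g (b j)) = g :=
      b.ext fun k ↦ by simp [Finsupp.single_apply]
    conv_rhs => rw [LinearMap.id_apply, ← hg, map_sum]
    simp [inv]
  exact Function.bijective_iff_has_inverse.mpr
    ⟨inv, LinearMap.congr_fun left_inv, LinearMap.congr_fun right_inv⟩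

variable (P I E) in
theorem tensorHomEval_bijective [Module.FinitePresentation R P] [Module.Injective R E] :
    Function.Bijective (tensorHomEval R P I E) := by
  obtain ⟨n, m, π, ρ, hπ, hρπ⟩ := Module.FinitePresentation.exists_fin' R P
  have hexact := LinearMap.exact_lcomp_of_exact_of_surjective I hρπ hπ
  exact LinearMap.bijective_of_surjective_of_bijective_of_right_exact
    (ρ.rTensor _) (π.rTensor _) _ _
    (tensorHomEval R (Fin m → R) I E) (tensorHomEval R (Fin n → R) I E) (tensorHomEval R P I E)
    (lcomp_lcomp_comp_tensorHomEval ρ) (lcomp_lcomp_comp_tensorHomEval π)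
    (rTensor_exact _ hρπ hπ) (lcomp_exact_of_exact E hexact)
    (tensorHomEval_bijective_of_free _ I E).surjective (tensorHomEval_bijective_of_free _ I E)
    (LinearMap.rTensor_surjective _ hπ)
    (lcomp_surjective_of_injective E (LinearMap.lcomp_injective_of_surjective π hπ))

theorem rTensor_hom_injective_iff_lcomp_lcomp_injective [Module.FinitePresentation R P]
    [Module.FinitePresentation R Q] [Module.Injective R E] {φ : P →ₗ[R] Q} :
    Function.Injective (φ.rTensor (I →ₗ[R] E)) ↔
      Function.Injective (LinearMap.lcomp R E (LinearMap.lcomp R I φ)) := by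
  rw [← (tensorHomEval_bijective (R := R) Q I E).injective.of_comp_iff,
    ← Function.Injective.of_comp_iff' _ (tensorHomEval_bijective (R := R) P I E),
    ← LinearMap.coe_comp, ← LinearMap.coe_comp, lcomp_lcomp_comp_tensorHomEval]

end TensorHomEval

end

section

variable {R} {I E : Type u} [AddCommGroup I] [AddCommGroup E] [Module R I] [Module R E]

instance flat_hom_of_injective [IsNoetherianRing R] [Module.Injective R I] [Module.Injective R E] :
    Module.Flat R (I →ₗ[R] E) := by
  refine Module.Flat.iff_rTensor_injective'.mpr fun J ↦ ?_
  have := Module.finitePresentation_of_finite R J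
  exact rTensor_hom_injective_iff_lcomp_lcomp_injective.mpr <|
    LinearMap.lcomp_injective_of_surjective _ <| lcomp_surjective_of_injective I J.subtype_injective

namespace IsInjectiveCogenerator

variable {A B : Type u} [AddCommGroup A] [AddCommGroup B] [Module R A] [Module R B]

theorem surjective_of_lcomp_injective (hE : IsInjectiveCogenerator R E) {f : A →ₗ[R] B}
    (hf : Function.Injective (LinearMap.lcomp R E f)) : Function.Surjective f := by
  intro b
  by_contra hb
  obtain ⟨g, hg⟩ := hE.2 (B ⧸ LinearMap.range f)
    ⟨Submodule.Quotient.mk b, mt (Submodule.Quotient.mk_eq_zero _).mp hb⟩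
  have hcomp : g ∘ₗ (LinearMap.range f).mkQ = 0 := hf <| LinearMap.ext fun a ↦ by
    simp [(Submodule.Quotient.mk_eq_zero _).mpr (LinearMap.mem_range_self f a)]
  exact hg (Submodule.linearMap_qext _ hcomp)

theorem injective_of_lcomp_surjective (hE : IsInjectiveCogenerator R E) {f : A →ₗ[R] B}
    (hf : Function.Surjective (LinearMap.lcomp R E f)) : Function.Injective f := by
  have := hE.1
  refine (injective_iff_map_eq_zero f).mpr fun a ha ↦ ?_
  by_contra ha₀
  obtain ⟨g, hg⟩ := hE.2 (LinearMap.ker f) ⟨⟨a, ha⟩, fun h ↦ ha₀ (congrArg Subtype.val h)⟩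
  obtain ⟨g, rfl⟩ := lcomp_surjective_of_injective E (LinearMap.ker f).subtype_injective g
  obtain ⟨g, rfl⟩ := hf g
  exact hg (by ext ⟨x, hx⟩; simp [LinearMap.mem_ker.mp hx])

theorem injective_of_flat_hom [IsNoetherianRing R] (hE : IsInjectiveCogenerator R E)
    [Module.Flat R (I →ₗ[R] E)] : Module.Injective R I := by
  have := hE.1
  refine Module.Baer.injective (Module.Baer.iff_surjective.mpr fun J ↦ ?_)
  have := Module.finitePresentation_of_finite R J
  exact hE.surjective_of_lcomp_injective <| rTensor_hom_injective_iff_lcomp_lcomp_injective.mp <|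
    Module.Flat.rTensor_preserves_injective_linearMap _ J.subtype_injective

end IsInjectiveCogenerator

variable (R) in
theorem isInjectiveCogenerator_characterModule : IsInjectiveCogenerator R (CharacterModule R) := by
  refine ⟨Module.Flat.iff_characterModule_injective.mp inferInstance, fun N _ _ ⟨x, hx⟩ ↦ ?_⟩
  obtain ⟨c, hc⟩ := CharacterModule.exists_character_apply_ne_zero_of_ne_zero hx
  let e : CharacterModule N ≃ₗ[R] (N →ₗ[R] CharacterModule R) :=
    CharacterModule.congr (TensorProduct.rid R N).symm ≪≫ₗ CharacterModule.homEquiv.symm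
  refine ⟨e c, e.map_ne_zero_iff.mpr ?_⟩
  rintro rfl
  exact hc rfl

end

section Cover

variable {R} {M I E : Type u} [AddCommGroup M] [AddCommGroup I] [AddCommGroup E]
  [Module R M] [Module R I] [Module R E] {i : M →ₗ[R] I}
  {h : (I →ₗ[R] E) →ₗ[R] (I →ₗ[R] E)}

theorem isFlatPrecover_lcomp [IsNoetherianRing R] [Module.Injective R I] [Module.Injective R E]
    (hi : Function.Injective i) : IsFlatPrecover R (LinearMap.lcomp R E i) :=
  ⟨inferInstance, fun _ _ _ _ g ↦ exists_lcomp_comp_eq_of_lTensor_injective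
    (Module.Flat.lTensor_preserves_injective_linearMap i hi) g⟩

theorem IsFlatPrecover.surjective {F N : Type u} [AddCommGroup F] [AddCommGroup N] [Module R F]
    [Module R N] {f : F →ₗ[R] N} (hf : IsFlatPrecover R f) : Function.Surjective f := by
  intro n
  obtain ⟨g, hg⟩ := hf.2 R inferInstance (LinearMap.toSpanSingleton R N n)
  exact ⟨g 1, by simpa using LinearMap.congr_fun hg 1⟩

theorem eq_zero_of_comap_range_eq_bot {P : Type*} [AddCommGroup P] [Module R P]
    (hess : ∀ N : Submodule R I, N ≠ ⊥ → N ⊓ LinearMap.range i ≠ ⊥) {y : P →ₗ[R] I}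
    (hy : (LinearMap.range i).comap y = ⊥) : y = 0 := by
  rw [← LinearMap.range_eq_bot]
  by_contra hne
  refine hess _ hne ?_
  rw [← Submodule.map_comap_eq, hy, Submodule.map_bot]

theorem tensorHomEval_lTensor_of_range_le {P : Type*} [AddCommGroup P] [Module R P]
    (hh : LinearMap.lcomp R E i ∘ₗ h = LinearMap.lcomp R E i) (t : P ⊗[R] (I →ₗ[R] E))
    {g : P →ₗ[R] I} (hg : ∀ p, g p ∈ LinearMap.range i) :
    tensorHomEval R P I E (h.lTensor P t) g = tensorHomEval R P I E t g := by
  induction t with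
  | zero => simp only [map_zero]
  | add t₁ t₂ ih₁ ih₂ => simp only [map_add, LinearMap.add_apply, ih₁, ih₂]
  | tmul p f =>
    obtain ⟨m, hm⟩ := hg p
    simpa [← hm] using LinearMap.congr_fun (LinearMap.congr_fun hh f) m

theorem lTensor_injective_of_finite [IsNoetherianRing R] [Module.Injective R E]
    (hess : ∀ N : Submodule R I, N ≠ ⊥ → N ⊓ LinearMap.range i ≠ ⊥)
    (hh : LinearMap.lcomp R E i ∘ₗ h = LinearMap.lcomp R E i)
    (P : Type*) [AddCommGroup P] [Module R P] [Module.Finite R P] :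
    Function.Injective (h.lTensor P) := by
  have eval_injective (L : Type _) [AddCommGroup L] [Module R L] [Module.Finite R L] :
      Function.Injective (tensorHomEval R L I E) :=
    have := Module.finitePresentation_of_finite R L
    (tensorHomEval_bijective L I E).injective
  refine (injective_iff_map_eq_zero _).mpr fun t ht ↦ ?_
  refine (map_eq_zero_iff _ (eval_injective P)).mp (LinearMap.ext fun x ↦ ?_)
  -- Noetherian induction on `c`, the submodule of those `p` with `x p` in the image of `M`
  induction hc : (LinearMap.range i).comap x using WellFoundedGT.induction generalizing x with
  | ind c ih =>
  have hquot : c.mkQ.rTensor (I →ₗ[R] E) t = 0 := by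
    refine (map_eq_zero_iff _ (eval_injective (P ⧸ c))).mp (LinearMap.ext fun y ↦ ?_)
    rw [tensorHomEval_rTensor]
    have hle : c ≤ (LinearMap.range i).comap (y ∘ₗ c.mkQ) := fun p hp ↦ by
      simp [(Submodule.Quotient.mk_eq_zero c).mpr hp]
    obtain heq | hlt := hle.eq_or_lt
    · have hy : (LinearMap.range i).comap y = ⊥ := by
        rw [← Submodule.map_comap_eq_of_surjective c.mkQ_surjective ((LinearMap.range i).comap y),
          ← Submodule.comap_comp, ← heq, Submodule.mkQ_map_self]
      simp [eq_zero_of_comap_range_eq_bot hess hy]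
    · exact ih _ hlt _ rfl
  obtain ⟨s, rfl⟩ :=
    (rTensor_exact (I →ₗ[R] E) (LinearMap.exact_subtype_mkQ c) c.mkQ_surjective t).mp hquot
  have hrange (p : c) : (x ∘ₗ c.subtype) p ∈ LinearMap.range i := hc.ge p.2
  rw [tensorHomEval_rTensor, ← tensorHomEval_lTensor_of_range_le hh s hrange,
    ← tensorHomEval_rTensor, ← lTensor_rTensor_apply_comm, ht, map_zero, LinearMap.zero_apply]

theorem lTensor_injective [IsNoetherianRing R] [Module.Injective R E]
    (hess : ∀ N : Submodule R I, N ≠ ⊥ → N ⊓ LinearMap.range i ≠ ⊥)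
    (hh : LinearMap.lcomp R E i ∘ₗ h = LinearMap.lcomp R E i)
    (N : Type*) [AddCommGroup N] [Module R N] : Function.Injective (h.lTensor N) :=
  lTensor_injective_of_forall_fg fun K hK ↦
    have := Module.Finite.iff_fg.mpr hK
    lTensor_injective_of_finite hess hh K

theorem bijective_of_lcomp_comp_eq [IsNoetherianRing R] [Module.Injective R E]
    (hess : ∀ N : Submodule R I, N ≠ ⊥ → N ⊓ LinearMap.range i ≠ ⊥)
    (hh : LinearMap.lcomp R E i ∘ₗ h = LinearMap.lcomp R E i) : Function.Bijective h := by
  have injective_of_comp_eq {k : (I →ₗ[R] E) →ₗ[R] (I →ₗ[R] E)}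
      (hk : LinearMap.lcomp R E i ∘ₗ k = LinearMap.lcomp R E i) : Function.Injective k :=
    (Module.FaithfullyFlat.lTensor_injective_iff_injective R R k).mp
      (lTensor_injective_of_finite hess hk R)
  obtain ⟨r, hr⟩ : ∃ r, r ∘ₗ h = LinearMap.id := by
    obtain ⟨r, hr⟩ := exists_lcomp_comp_eq_of_lTensor_injective
      (lTensor_injective hess hh I) (LinearMap.id : (I →ₗ[R] E) →ₗ[R] I →ₗ[R] E).flip
    exact ⟨r.flip, LinearMap.ext fun f ↦ LinearMap.ext fun x ↦
      LinearMap.congr_fun (LinearMap.congr_fun hr x) f⟩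
  -- unlike `r`, the corrected retraction `r'` lies over `Hom(M, E)`
  let r' := r + LinearMap.id - h ∘ₗ r
  have hr'h : r' ∘ₗ h = LinearMap.id := by
    simp only [r', LinearMap.sub_comp, LinearMap.add_comp, LinearMap.comp_assoc, hr,
      LinearMap.id_comp, LinearMap.comp_id, add_sub_cancel_right]
  have hr' : LinearMap.lcomp R E i ∘ₗ r' = LinearMap.lcomp R E i := by
    simp only [r', LinearMap.comp_sub, LinearMap.comp_add, ← LinearMap.comp_assoc, hh,
      LinearMap.comp_id, add_sub_cancel_left]
  have hinv : Function.LeftInverse r' h := LinearMap.congr_fun hr'h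
  exact ⟨hinv.injective, (hinv.rightInverse_of_injective (injective_of_comp_eq hr')).surjective⟩

theorem IsInjectiveEnvelope.isFlatCover_lcomp [IsNoetherianRing R] [Module.Injective R E]
    (hi : IsInjectiveEnvelope R i) : IsFlatCover R (LinearMap.lcomp R E i) :=
  have := hi.1
  ⟨isFlatPrecover_lcomp hi.2.1, fun _ hh ↦ bijective_of_lcomp_comp_eq hi.2.2 hh⟩

namespace IsInjectiveCogenerator

theorem inf_range_ne_bot_of_bijective (hE : IsInjectiveCogenerator R E) [Module.Injective R I]
    (hi : Function.Injective i)
    (hbij : ∀ h : (I →ₗ[R] E) →ₗ[R] (I →ₗ[R] E),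
      LinearMap.lcomp R E i ∘ₗ h = LinearMap.lcomp R E i → Function.Bijective h)
    {N : Submodule R I} (hN : N ≠ ⊥) : N ⊓ LinearMap.range i ≠ ⊥ := by
  refine mt (fun hinf ↦ ?_) hN
  have hmkQ : Function.Injective (N.mkQ ∘ₗ i) := by
    refine (injective_iff_map_eq_zero _).mpr fun m hm ↦ hi ?_
    rw [map_zero, ← Submodule.mem_bot R, ← hinf]
    exact ⟨(Submodule.Quotient.mk_eq_zero N).mp hm, LinearMap.mem_range_self i m⟩
  obtain ⟨e, he⟩ := lcomp_surjective_of_injective I hmkQ i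
  have hcomp : LinearMap.lcomp R E i ∘ₗ LinearMap.lcomp R E (e ∘ₗ N.mkQ) =
      LinearMap.lcomp R E i :=
    LinearMap.ext fun f ↦ congrArg (f ∘ₗ ·) he
  have hinj := hE.injective_of_lcomp_surjective (hbij _ hcomp).surjective
  rw [← N.ker_mkQ, LinearMap.ker_eq_bot]
  exact Function.Injective.of_comp hinj

theorem isInjectiveEnvelope_of_isFlatCover [IsNoetherianRing R]
    (hE : IsInjectiveCogenerator R E) (hcover : IsFlatCover R (LinearMap.lcomp R E i)) :
    IsInjectiveEnvelope R i := by
  have := hcover.1.1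
  have hI : Module.Injective R I := hE.injective_of_flat_hom
  have hi : Function.Injective i := hE.injective_of_lcomp_surjective hcover.1.surjective
  exact ⟨hI, hi, fun _ ↦ hE.inf_range_ne_bot_of_bijective hi hcover.2⟩

end IsInjectiveCogenerator

end Cover

/-- Over a commutative Noetherian ring, `i : M → I` is an injective
envelope iff `Hom_R(i, E)` is a flat cover for some injective cogenerator `E`, iff
`Hom_R(i, E)` is a flat cover for every injective module `E`. -/
theorem injectiveEnvelope_iff_dual_flatCover [IsNoetherianRing R]
    {M I : Type u} [AddCommGroup M] [AddCommGroup I] [Module R M] [Module R I]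
    (i : M →ₗ[R] I) :
    (IsInjectiveEnvelope R i ↔
      ∃ (E : Type u) (_ : AddCommGroup E) (_ : Module R E),
        IsInjectiveCogenerator R E ∧ IsFlatCover R (LinearMap.lcomp R E i)) ∧
    (IsInjectiveEnvelope R i ↔
      ∀ (E : Type u) [AddCommGroup E] [Module R E], Module.Injective R E →
        IsFlatCover R (LinearMap.lcomp R E i)) := by
  have cogenerator := isInjectiveCogenerator_characterModule R
  have cover_of_envelope (hi : IsInjectiveEnvelope R i) (E : Type u) [AddCommGroup E] [Module R E]
      (_ : Module.Injective R E) : IsFlatCover R (LinearMap.lcomp R E i) :=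
    hi.isFlatCover_lcomp
  refine ⟨⟨fun hi ↦ ?_, fun ⟨E, _, _, hE, hcover⟩ ↦ ?_⟩, cover_of_envelope, fun hcover ↦ ?_⟩
  · exact ⟨CharacterModule R, _, _, cogenerator, cover_of_envelope hi _ cogenerator.1⟩
  · exact hE.isInjectiveEnvelope_of_isFlatCover hcover
  · exact cogenerator.isInjectiveEnvelope_of_isFlatCover (hcover _ cogenerator.1)
end

section
/- Let R be a commutative Noetherian ring and let p : F → M be an epimorphism of R-modules where F is flat and cotorsion. Then p is a flat cover if and only if ker p is cotorsion and the induced map k(p) ⊗_{R_p} Hom_R(R_p, p) : k(p) ⊗_{R_p} Hom_R(R_p, F) → k(p) ⊗_{R_p} Hom_R(R_p, M) is an isomorphism for all p ∈ Spec R. -/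
universe u

variable (R : Type u) [CommRing R]

open CategoryTheory

/-- A module `C` is cotorsion if `Ext¹(F, C) = 0` for every flat module `F`. -/
def IsCotorsion (C : Type u) [AddCommGroup C] [Module R C] : Prop :=
  ∀ (F : Type u) [AddCommGroup F] [Module R F], Module.Flat R F →
    Subsingleton (((Ext R (ModuleCat.{u} R) 1).obj
      (Opposite.op (ModuleCat.of R F))).obj (ModuleCat.of R C))

/-- The `A`-module structure on `Hom_R(X, M)` for an `R`-algebra `A` and an `A`-module
`X`, given by `(a • f) x = f (a • x)`. -/
noncomputable instance (priority := 50) LinearMap.domSMulModule (A : Type u) [CommRing A] [Algebra R A]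
    (X : Type u) [AddCommGroup X] [Module R X] [Module A X] [IsScalarTower R A X]
    (M : Type u) [AddCommGroup M] [Module R M] : Module A (X →ₗ[R] M) where
  smul a f := f ∘ₗ (a • (LinearMap.id : X →ₗ[R] X))
  one_smul f := LinearMap.ext fun x => by
    show f ((1 : A) • x) = f x
    rw [one_smul]
  mul_smul a b f := LinearMap.ext fun x => by
    show f ((a * b) • x) = f (b • a • x)
    rw [mul_comm, mul_smul]
  smul_zero a := rfl
  smul_add a f g := rfl
  add_smul a b f := LinearMap.ext fun x => by
    show f ((a + b) • x) = f (a • x) + f (b • x)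
    rw [add_smul, map_add]
  zero_smul f := LinearMap.ext fun x => by
    show f ((0 : A) • x) = 0
    rw [zero_smul, map_zero]

/-- Postcomposition `Hom_R(A, F) → Hom_R(A, M)` with `f : F → M`, as an `A`-linear map. -/
noncomputable def LinearMap.domHomPostcomp (A : Type u) [CommRing A] [Algebra R A]
    {F M : Type u} [AddCommGroup F] [AddCommGroup M] [Module R F] [Module R M]
    (f : F →ₗ[R] M) : (A →ₗ[R] F) →ₗ[A] (A →ₗ[R] M) where
  toFun g := f ∘ₗ g
  map_add' g h := LinearMap.ext fun x => by simp
  map_smul' a g := LinearMap.ext fun x => rfl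

/-!
A flat cotorsion module `F` over a Noetherian ring is a direct summand of its double character
module, so `N ⊗ F` is cotorsion for every finitely generated `N`, and maps from flat modules lift
along `N ⊗ F → N' ⊗ F` whenever `N → N'` is surjective.

A flat precover `p : F → M` is a flat cover iff every `g : R_q → F` with `p ∘ g = 0` sends `1` into
`qF`. If `g 1 ∉ qF`, then `g` is injective with flat cokernel, so its corestriction `R_q → ker p`
extends to some `e : F → ker p`, and `id - e` is an endomorphism over `M` that kills `g 1`.
Conversely, an endomorphism `h` with `h (g 1) ≡ g 1` modulo `qF` for all `q` and `g` induces a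
bijection on `R/q ⊗ F` for every `q`, by Noetherian induction: there `h` is bijective modulo each
`s ∉ q`, and it fixes the elements divisible by all `s ∉ q`, since these are the images of `1`
under maps `R_q → R/q ⊗ F`, which lift to `F`.

Finally, the lifting property shows that `g 1 ∈ qF` iff `g` lies in the maximal ideal of `R_q` times
`Hom(R_q, F)`, which turns the criterion into injectivity of `k(q) ⊗ Hom(R_q, p)`.
-/

section Cotorsion

variable {R}

lemma subsingleton_ext_iff_subsingleton_abelianExt (G C : ModuleCat.{u} R) :
    Subsingleton (((Ext R (ModuleCat.{u} R) 1).obj (Opposite.op G)).obj C) ↔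
      Subsingleton (Abelian.Ext.{u} G C 1) := by
  let P := projectiveResolution G
  have exact_iff : Subsingleton (((Ext R (ModuleCat.{u} R) 1).obj (Opposite.op G)).obj C) ↔
      ∀ f : P.complex.X 1 ⟶ C, P.complex.d 2 1 ≫ f = 0 →
        ∃ g : P.complex.X 0 ⟶ C, P.complex.d 1 0 ≫ g = f := by
    rw [← ModuleCat.isZero_iff_subsingleton, (P.isoExt (R := R) 1 C).isZero_iff,
      ← HomologicalComplex.exactAt_iff_isZero_homology,
      HomologicalComplex.exactAt_iff' _ 0 1 2 (by simp) (by simp),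
      ShortComplex.moduleCat_exact_iff]
    rfl
  rw [exact_iff]
  constructor
  · refine fun h => subsingleton_of_forall_eq 0 fun α => ?_
    obtain ⟨f, hf, rfl⟩ := P.extMk_surjective α 2 rfl
    exact (P.extMk_eq_zero_iff f 2 rfl hf 0 rfl).2 (h f hf)
  · exact fun _ f hf => (P.extMk_eq_zero_iff f 2 rfl hf 0 rfl).1 (Subsingleton.elim _ _)

variable {A B Q C : Type u} [AddCommGroup A] [Module R A] [AddCommGroup B] [Module R B]
  [AddCommGroup Q] [Module R Q] [AddCommGroup C] [Module R C]

lemma isCotorsion_iff_subsingleton_abelianExt :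
    IsCotorsion R C ↔ ∀ (G : Type u) [AddCommGroup G] [Module R G], Module.Flat R G →
      Subsingleton (Abelian.Ext.{u} (ModuleCat.of R G) (ModuleCat.of R C) 1) := by
  simp only [IsCotorsion, subsingleton_ext_iff_subsingleton_abelianExt]

lemma IsCotorsion.exists_lift (hA : IsCotorsion R A) [Module.Flat R C]
    {f : A →ₗ[R] B} {g : B →ₗ[R] Q} (hf : Function.Injective f) (hfg : Function.Exact f g)
    (hg : Function.Surjective g) (γ : C →ₗ[R] Q) : ∃ δ : C →ₗ[R] B, g ∘ₗ δ = γ := by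
  have hS := ModuleCat.shortComplex_shortExact
    (ModuleCat.shortComplexOfCompEqZero f g hfg.linearMap_comp_eq_zero) hfg hf hg
  have := isCotorsion_iff_subsingleton_abelianExt.1 hA C inferInstance
  obtain ⟨β, hβ⟩ := Abelian.Ext.covariant_sequence_exact₃ (ModuleCat.of R C) hS
    (Abelian.Ext.mk₀ (ModuleCat.ofHom γ)) rfl (Subsingleton.elim _ _)
  obtain ⟨δ, rfl⟩ := (Abelian.Ext.mk₀_bijective _ _).surjective β
  rw [Abelian.Ext.mk₀_comp_mk₀] at hβ
  exact ⟨δ.hom, congr(($((Abelian.Ext.mk₀_bijective _ _).injective hβ)).hom)⟩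

lemma IsCotorsion.exists_extend (hC : IsCotorsion R C) [Module.Flat R Q]
    {f : A →ₗ[R] B} {g : B →ₗ[R] Q} (hf : Function.Injective f) (hfg : Function.Exact f g)
    (hg : Function.Surjective g) (γ : A →ₗ[R] C) : ∃ δ : B →ₗ[R] C, δ ∘ₗ f = γ := by
  have hS := ModuleCat.shortComplex_shortExact
    (ModuleCat.shortComplexOfCompEqZero f g hfg.linearMap_comp_eq_zero) hfg hf hg
  have := isCotorsion_iff_subsingleton_abelianExt.1 hC Q inferInstance
  obtain ⟨β, hβ⟩ := Abelian.Ext.contravariant_sequence_exact₁ hS (ModuleCat.of R C)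
    (Abelian.Ext.mk₀ (ModuleCat.ofHom γ)) rfl (Subsingleton.elim _ _)
  obtain ⟨δ, rfl⟩ := (Abelian.Ext.mk₀_bijective _ _).surjective β
  rw [Abelian.Ext.mk₀_comp_mk₀] at hβ
  exact ⟨δ.hom, congr(($((Abelian.Ext.mk₀_bijective _ _).injective hβ)).hom)⟩

lemma isCotorsion_of_forall_exists_extend
    (h : ∀ (B : Type u) [AddCommGroup B] [Module R B] (A : Submodule R B), Module.Flat R (B ⧸ A) →
      ∀ f : A →ₗ[R] C, ∃ g : B →ₗ[R] C, g ∘ₗ A.subtype = f) :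
    IsCotorsion R C := by
  refine isCotorsion_iff_subsingleton_abelianExt.2 fun G _ _ _ =>
    subsingleton_of_forall_eq 0 fun α => ?_
  let π := Finsupp.linearCombination R (id : G → G)
  have hπ : Function.Surjective π := Finsupp.linearCombination_id_surjective R G
  have hS := LinearMap.shortExact_shortComplexKer hπ
  have : Projective (ModuleCat.of R (G →₀ R)) :=
    (IsProjective.iff_projective _).1 inferInstance
  obtain ⟨β, rfl⟩ := Abelian.Ext.contravariant_sequence_exact₃ hS (ModuleCat.of R C) α
    (Abelian.Ext.eq_zero_of_projective _) (add_zero 1)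
  obtain ⟨f, rfl⟩ := (Abelian.Ext.mk₀_bijective _ _).surjective β
  obtain ⟨g, hg⟩ := h _ (LinearMap.ker π)
    (Module.Flat.of_linearEquiv (π.quotKerEquivOfSurjective hπ)) f.hom
  have hfg : f = ModuleCat.ofHom (LinearMap.ker π).subtype ≫ ModuleCat.ofHom g :=
    ModuleCat.hom_ext hg.symm
  rw [hfg, ← Abelian.Ext.mk₀_comp_mk₀]
  exact hS.extClass_comp_assoc _

lemma IsCotorsion.of_leftInverse (hB : IsCotorsion R B) {i : C →ₗ[R] B} {r : B →ₗ[R] C}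
    (hri : r ∘ₗ i = LinearMap.id) : IsCotorsion R C :=
  isCotorsion_of_forall_exists_extend fun _ _ _ A _ f => by
    obtain ⟨g, hg⟩ := hB.exists_extend A.injective_subtype (LinearMap.exact_subtype_mkQ A)
      A.mkQ_surjective (i ∘ₗ f)
    exact ⟨r ∘ₗ g, by rw [LinearMap.comp_assoc, hg, ← LinearMap.comp_assoc, hri,
      LinearMap.id_comp]⟩

lemma isCotorsion_characterModule (X : Type u) [AddCommGroup X] [Module R X] :
    IsCotorsion R (CharacterModule X) := by
  refine isCotorsion_of_forall_exists_extend fun B _ _ A _ f => ?_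
  have hinj : Function.Injective (A.subtype.rTensor X) :=
    (LinearMap.lTensor_inj_iff_rTensor_inj X A.subtype).1
      (LinearMap.lTensor_injective_of_exact_of_flat A.mkQ A.mkQ_surjective A.subtype
        A.injective_subtype (LinearMap.exact_subtype_mkQ A) X)
  exact (rTensor_injective_iff_lcomp_surjective.1 hinj) f

end Cotorsion

section CharacterModule

open TensorProduct

variable {R}

section Evaluation

variable (R) (N X : Type u) [AddCommGroup N] [Module R N] [AddCommGroup X] [Module R X]

/-- The evaluation map `N ⊗ X* → Hom(N, X)*`, `n ⊗ ξ ↦ (f ↦ ξ (f n))`, where `*` denotes the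
character module. -/
noncomputable def tensorCharacterModuleHom :
    N ⊗[R] CharacterModule X →ₗ[R] CharacterModule (N →ₗ[R] X) :=
  TensorProduct.lift <| LinearMap.mk₂ R (fun n ξ => CharacterModule.dual (LinearMap.applyₗ n) ξ)
    (fun m n ξ => DFunLike.ext _ _ fun f => congr(ξ $(f.map_add m n)).trans (ξ.map_add _ _))
    (fun r n ξ => DFunLike.ext _ _ fun f => congr(ξ $(f.map_smul r n)))
    (fun n => map_add (CharacterModule.dual (LinearMap.applyₗ n)))
    (fun r n => map_smul (CharacterModule.dual (LinearMap.applyₗ n)) r)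

/-- The evaluation map `X → X**` into the double character module. -/
noncomputable def characterModuleEval : X →ₗ[R] CharacterModule (CharacterModule X) where
  toFun x := AddMonoidHom.eval x
  map_add' x y := map_add AddMonoidHom.eval x y
  map_smul' _ _ := rfl

end Evaluation

variable {N N' X : Type u} [AddCommGroup N] [Module R N] [AddCommGroup N'] [Module R N']
  [AddCommGroup X] [Module R X]

lemma dual_lcomp_comp_tensorCharacterModuleHom (g : N →ₗ[R] N') :
    CharacterModule.dual (LinearMap.lcomp R X g) ∘ₗ tensorCharacterModuleHom R N X =
      tensorCharacterModuleHom R N' X ∘ₗ g.rTensor (CharacterModule X) := by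
  ext n ξ : 3
  rfl

lemma tensorCharacterModuleHom_bijective_of_pi (n : ℕ) :
    Function.Bijective (tensorCharacterModuleHom R (Fin n → R) X) := by
  let inv : CharacterModule ((Fin n → R) →ₗ[R] X) →ₗ[R] (Fin n → R) ⊗[R] CharacterModule X :=
    ∑ i, TensorProduct.mk R _ _ (Pi.single i 1) ∘ₗ
      CharacterModule.dual (LinearMap.smulRightₗ (LinearMap.proj i))
  have left_inv : inv ∘ₗ tensorCharacterModuleHom R (Fin n → R) X = LinearMap.id := by
    refine TensorProduct.ext' fun v ξ => ?_
    have hdual (i : Fin n) : CharacterModule.dual (LinearMap.smulRightₗ (LinearMap.proj i))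
        (tensorCharacterModuleHom R (Fin n → R) X (v ⊗ₜ ξ)) = v i • ξ := rfl
    simp only [inv, LinearMap.comp_apply, LinearMap.sum_apply, mk_apply, hdual,
      tmul_smul, smul_tmul', ← sum_tmul, LinearMap.id_apply]
    rw [← pi_eq_sum_univ' v]
  have right_inv : tensorCharacterModuleHom R (Fin n → R) X ∘ₗ inv = LinearMap.id := by
    refine LinearMap.ext fun Φ => DFunLike.ext _ _ fun f => ?_
    have : f = ∑ i, LinearMap.smulRightₗ (LinearMap.proj i) (f (Pi.single i 1)) := by
      ext i
      simp [Pi.single_apply]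
    conv_rhs => rw [this]
    simp only [inv, LinearMap.comp_apply, LinearMap.sum_apply, mk_apply, map_sum]
    exact AddMonoidHom.finsetSum_apply _ _ f
  exact Function.bijective_iff_has_inverse.2
    ⟨inv, fun x => congr($left_inv x), fun x => congr($right_inv x)⟩

lemma exact_dual {A B C : Type u} [AddCommGroup A] [Module R A] [AddCommGroup B] [Module R B]
    [AddCommGroup C] [Module R C] {f : A →ₗ[R] B} {g : B →ₗ[R] C} (hfg : Function.Exact f g) :
    Function.Exact (CharacterModule.dual g) (CharacterModule.dual f) := by
  refine fun c => ⟨fun hc => ?_, ?_⟩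
  · let g' : B →+ LinearMap.range g := g.rangeRestrict.toAddMonoidHom
    have hker : g'.ker ≤ AddMonoidHom.ker c := fun b hb => by
      obtain ⟨a, rfl⟩ := (hfg b).1 congr(($hb).val)
      exact congr($hc a)
    obtain ⟨d, hd⟩ := CharacterModule.dual_surjective_of_injective (LinearMap.range g).subtype
      Subtype.val_injective (g'.liftOfSurjective g.surjective_rangeRestrict ⟨c, hker⟩)
    refine ⟨d, DFunLike.ext _ _ fun b => ?_⟩
    exact congr($hd (g' b)).trans (g'.liftOfRightInverse_comp_apply _ _ ⟨c, hker⟩ b)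
  · rintro ⟨d, rfl⟩
    exact DFunLike.ext _ _ fun a =>
      congr(d $(hfg.apply_apply_eq_zero a)).trans (map_zero d)

lemma tensorCharacterModuleHom_surjective [Module.Finite R N] :
    Function.Surjective (tensorCharacterModuleHom R N X) := by
  obtain ⟨n, π, hπ⟩ := Module.Finite.exists_fin' R N
  have hdual : Function.Surjective (CharacterModule.dual (LinearMap.lcomp R X π)) :=
    CharacterModule.dual_surjective_of_injective _ (LinearMap.lcomp_injective_of_surjective _ hπ)
  refine .of_comp (g := π.rTensor (CharacterModule X)) ?_
  rw [← LinearMap.coe_comp, ← dual_lcomp_comp_tensorCharacterModuleHom, LinearMap.coe_comp]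
  exact hdual.comp (tensorCharacterModuleHom_bijective_of_pi n).surjective

lemma tensorCharacterModuleHom_bijective [Module.FinitePresentation R N] :
    Function.Bijective (tensorCharacterModuleHom R N X) := by
  obtain ⟨n, π, hπ⟩ := Module.Finite.exists_fin' R N
  have : Module.Finite R (LinearMap.ker π) := .of_fg (Module.FinitePresentation.fg_ker π hπ)
  have hexact := π.exact_subtype_ker_map
  exact LinearMap.bijective_of_surjective_of_bijective_of_right_exact _ _ _ _ _ _ _
    (dual_lcomp_comp_tensorCharacterModuleHom (LinearMap.ker π).subtype)
    (dual_lcomp_comp_tensorCharacterModuleHom π) (rTensor_exact _ hexact hπ)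
    (exact_dual (LinearMap.exact_lcomp_of_exact_of_surjective X hexact hπ))
    tensorCharacterModuleHom_surjective (tensorCharacterModuleHom_bijective_of_pi n)
    (LinearMap.rTensor_surjective _ hπ)
    (CharacterModule.dual_surjective_of_injective _ (LinearMap.lcomp_injective_of_surjective _ hπ))

lemma flat_characterModule_of_injective [IsNoetherianRing R] (hX : Module.Injective R X) :
    Module.Flat R (CharacterModule X) := by
  refine Module.Flat.iff_rTensor_injective.2 fun I _ => ?_
  have hsurj : Function.Surjective (LinearMap.lcomp R X I.subtype) := fun f => by
    obtain ⟨g, hg⟩ := hX.out I.subtype I.injective_subtype f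
    exact ⟨g, LinearMap.ext hg⟩
  have := Module.finitePresentation_of_finite R I
  refine .of_comp (f := tensorCharacterModuleHom R R X) ?_
  rw [← LinearMap.coe_comp, ← dual_lcomp_comp_tensorCharacterModuleHom, LinearMap.coe_comp]
  exact (CharacterModule.dual_injective_of_surjective _ hsurj).comp
    tensorCharacterModuleHom_bijective.injective

lemma characterModuleEval_injective : Function.Injective (characterModuleEval R X) :=
  (injective_iff_map_eq_zero _).2 fun _ hx =>
    CharacterModule.eq_zero_of_character_apply fun c => congr($hx c)

lemma lTensor_characterModuleEval_injective :
    Function.Injective ((characterModuleEval R X).lTensor N) :=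
  (LinearMap.lTensor_inj_iff_rTensor_inj N _).2 <|
    rTensor_injective_iff_lcomp_surjective.2 fun φ =>
      ⟨CharacterModule.dual (characterModuleEval R N) ∘ₗ
        CharacterModule.dual (CharacterModule.dual φ), rfl⟩

end CharacterModule

section PureInjective

open TensorProduct

variable {R}

lemma lTensor_rTensor_comm_apply {M N S T : Type*} [AddCommGroup M] [Module R M] [AddCommGroup N]
    [Module R N] [AddCommGroup S] [Module R S] [AddCommGroup T] [Module R T] (h : M →ₗ[R] N)
    (i : S →ₗ[R] T) (x : S ⊗[R] M) :
    h.lTensor T (i.rTensor M x) = i.rTensor N (h.lTensor S x) := by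
  rw [← LinearMap.comp_apply, ← LinearMap.comp_apply, LinearMap.lTensor_comp_rTensor,
    LinearMap.rTensor_comp_lTensor]

lemma flat_of_exact_of_lTensor_quotient_injective {A B Q : Type u} [AddCommGroup A] [Module R A]
    [AddCommGroup B] [Module R B] [AddCommGroup Q] [Module R Q] [Module.Flat R B]
    {f : A →ₗ[R] B} {g : B →ₗ[R] Q} (hfg : Function.Exact f g) (hg : Function.Surjective g)
    (hf : ∀ I : Ideal R, I.FG → Function.Injective (f.lTensor (R ⧸ I))) : Module.Flat R Q := by
  refine Module.Flat.iff_rTensor_injective.2 fun I hI =>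
    (injective_iff_map_eq_zero _).2 fun z hz => ?_
  obtain ⟨b, rfl⟩ := g.lTensor_surjective I hg z
  obtain ⟨a, ha⟩ := (lTensor_exact R hfg hg _).1
    ((lTensor_rTensor_comm_apply g I.subtype b).trans hz)
  have hexact (M : Type u) [AddCommGroup M] [Module R M] :=
    rTensor_exact M (LinearMap.exact_subtype_mkQ I) I.mkQ_surjective
  obtain ⟨a', rfl⟩ := (hexact A a).1 <| hf I hI <| by
    rw [lTensor_rTensor_comm_apply, ha, map_zero, (hexact B).apply_apply_eq_zero]
  have hb : f.lTensor I a' = b :=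
    Module.Flat.rTensor_preserves_injective_linearMap I.subtype I.injective_subtype
      ((lTensor_rTensor_comm_apply f I.subtype a').symm.trans ha)
  rw [← hb, (lTensor_exact I hfg hg).apply_apply_eq_zero]

variable (R) in
/-- Pure-injectivity, in the form: `F` is a direct summand of a character module. -/
def IsPureInjective (F : Type u) [AddCommGroup F] [Module R F] : Prop :=
  ∃ (X : Type u) (_ : AddCommGroup X) (_ : Module R X) (i : F →ₗ[R] CharacterModule X)
    (r : CharacterModule X →ₗ[R] F), r ∘ₗ i = LinearMap.id

variable {F : Type u} [AddCommGroup F] [Module R F]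

lemma IsPureInjective.isCotorsion_tensor (hF : IsPureInjective R F) (N : Type u) [AddCommGroup N]
    [Module R N] [Module.FinitePresentation R N] : IsCotorsion R (N ⊗[R] F) := by
  obtain ⟨X, _, _, i, r, hri⟩ := hF
  let e := LinearEquiv.ofBijective _ (tensorCharacterModuleHom_bijective (R := R) (N := N) (X := X))
  refine (isCotorsion_characterModule (N →ₗ[R] X)).of_leftInverse
    (i := e.toLinearMap ∘ₗ i.lTensor N) (r := r.lTensor N ∘ₗ e.symm.toLinearMap) ?_
  rw [LinearMap.comp_assoc, ← LinearMap.comp_assoc _ _ e.symm.toLinearMap, LinearEquiv.symm_comp,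
    LinearMap.id_comp, ← LinearMap.lTensor_comp, hri, LinearMap.lTensor_id]

lemma IsCotorsion.isPureInjective_of_flat [IsNoetherianRing R] [Module.Flat R F]
    (hF : IsCotorsion R F) : IsPureInjective R F := by
  have := flat_characterModule_of_injective
    (Module.Flat.iff_characterModule_injective.1 ‹Module.Flat R F›)
  let ev := characterModuleEval R F
  have : Module.Flat R (CharacterModule (CharacterModule F) ⧸ LinearMap.range ev) :=
    flat_of_exact_of_lTensor_quotient_injective ev.exact_map_mkQ_range
      (Submodule.mkQ_surjective _) fun _ _ => lTensor_characterModuleEval_injective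
  obtain ⟨r, hr⟩ := hF.exists_extend characterModuleEval_injective ev.exact_map_mkQ_range
    (Submodule.mkQ_surjective _) LinearMap.id
  exact ⟨CharacterModule F, _, _, ev, r, hr⟩

lemma IsCotorsion.tensor_of_flat [IsNoetherianRing R] [Module.Flat R F] (hF : IsCotorsion R F)
    (N : Type u) [AddCommGroup N] [Module R N] [Module.Finite R N] : IsCotorsion R (N ⊗[R] F) :=
  have := Module.finitePresentation_of_finite R N
  hF.isPureInjective_of_flat.isCotorsion_tensor N

lemma IsCotorsion.exists_lift_rTensor [IsNoetherianRing R] [Module.Flat R F]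
    (hF : IsCotorsion R F) {N N' : Type u} [AddCommGroup N] [Module R N] [AddCommGroup N']
    [Module R N'] [Module.Finite R N] {π : N →ₗ[R] N'} (hπ : Function.Surjective π) {G : Type u}
    [AddCommGroup G] [Module R G] [Module.Flat R G] (γ : G →ₗ[R] N' ⊗[R] F) :
    ∃ δ : G →ₗ[R] N ⊗[R] F, π.rTensor F ∘ₗ δ = γ :=
  (hF.tensor_of_flat (LinearMap.ker π)).exists_lift
    (Module.Flat.rTensor_preserves_injective_linearMap _ (LinearMap.ker π).injective_subtype)
    (rTensor_exact F π.exact_subtype_ker_map hπ) (π.rTensor_surjective F hπ) γ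

end PureInjective

section FlatPrecover

variable {R} {F M : Type u} [AddCommGroup F] [Module R F] [AddCommGroup M] [Module R M]
  {p : F →ₗ[R] M}

lemma IsFlatPrecover.isCotorsion_ker (hp : IsFlatPrecover R p) (hF : IsCotorsion R F) :
    IsCotorsion R (LinearMap.ker p) := by
  refine isCotorsion_of_forall_exists_extend fun B _ _ A _ f => ?_
  obtain ⟨f', hf'⟩ := hF.exists_extend A.injective_subtype (LinearMap.exact_subtype_mkQ A)
    A.mkQ_surjective ((LinearMap.ker p).subtype ∘ₗ f)
  have hpf' : A ≤ LinearMap.ker (p ∘ₗ f') := fun a ha => by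
    simp [show f' a = f ⟨a, ha⟩ from congr($hf' ⟨a, ha⟩)]
  obtain ⟨δ, hδ⟩ := hp.2 (B ⧸ A) inferInstance (A.liftQ (p ∘ₗ f') hpf')
  refine ⟨(f' - δ ∘ₗ A.mkQ).codRestrict _ fun b => ?_, LinearMap.ext fun a => Subtype.ext ?_⟩
  · have hb : p (δ (A.mkQ b)) = p (f' b) := congr($hδ (A.mkQ b))
    simpa [sub_eq_zero] using hb.symm
  · simpa [(Submodule.Quotient.mk_eq_zero A).2 a.2] using congr($hf' a)

lemma isFlatPrecover_of_isCotorsion_ker [Module.Flat R F] (hp : Function.Surjective p)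
    (hK : IsCotorsion R (LinearMap.ker p)) : IsFlatPrecover R p :=
  ⟨‹_›, fun _ _ _ _ g =>
    hK.exists_lift (LinearMap.ker p).injective_subtype p.exact_subtype_ker_map hp g⟩

end FlatPrecover

section Devissage

open TensorProduct

variable {R}

lemma devissage_of_annihilator_le [IsNoetherianRing R]
    {motive : (N : Type u) → [AddCommGroup N] → [Module R N] → [Module.Finite R N] → Prop}
    (subsingleton : ∀ (N : Type u) [AddCommGroup N] [Module R N] [Module.Finite R N],
      Subsingleton N → motive N)
    (exact : ∀ (N₁ N₂ N₃ : Type u) [AddCommGroup N₁] [Module R N₁] [Module.Finite R N₁]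
      [AddCommGroup N₂] [Module R N₂] [Module.Finite R N₂]
      [AddCommGroup N₃] [Module R N₃] [Module.Finite R N₃] (i : N₁ →ₗ[R] N₂) (π : N₂ →ₗ[R] N₃),
      Function.Injective i → Function.Exact i π → Function.Surjective π →
      motive N₁ → motive N₃ → motive N₂)
    (N : Type u) [AddCommGroup N] [Module R N] [Module.Finite R N]
    (quotient : ∀ p : Ideal R, p.IsPrime → Module.annihilator R N ≤ p → motive (R ⧸ p)) :
    motive N := by
  induction ‹Module.Finite R N› using
    IsNoetherianRing.induction_on_isQuotientEquivQuotientPrime R with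
  | subsingleton N => exact subsingleton N inferInstance
  | quotient N p e =>
    exact exact _ N PUnit e.symm.toLinearMap 0 e.symm.injective
      ((LinearMap.exact_zero_iff_surjective _ _).2 e.symm.surjective)
      (Function.surjective_to_subsingleton _)
      (quotient p.1 p.2 <| (Ideal.annihilator_quotient (I := p.1)) ▸ e.annihilator_eq.le)
      (subsingleton _ inferInstance)
  | exact N₁ N₂ N₃ i π hi hπ hiπ ih₁ ih₃ =>
    exact exact N₁ N₂ N₃ i π hi hiπ hπ
      (ih₁ fun p hp h => quotient p hp ((i.annihilator_le_of_injective hi).trans h))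
      (ih₃ fun p hp h => quotient p hp ((π.annihilator_le_of_surjective hπ).trans h))

variable {A F N₁ N₂ N₃ : Type*} [AddCommGroup A] [Module R A] [AddCommGroup F] [Module R F]
  [AddCommGroup N₁] [Module R N₁] [AddCommGroup N₂] [Module R N₂] [AddCommGroup N₃] [Module R N₃]
  (g : A →ₗ[R] F) {i : N₁ →ₗ[R] N₂} {π : N₂ →ₗ[R] N₃}

lemma lTensor_injective_of_exact [Module.Flat R F] (hi : Function.Injective i)
    (hiπ : Function.Exact i π) (hπ : Function.Surjective π)
    (h₁ : Function.Injective (g.lTensor N₁)) (h₃ : Function.Injective (g.lTensor N₃)) :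
    Function.Injective (g.lTensor N₂) := by
  refine (injective_iff_map_eq_zero _).2 fun z hz => ?_
  have hπz : π.rTensor A z = 0 := h₃ <| by rw [lTensor_rTensor_comm_apply, hz, map_zero, map_zero]
  obtain ⟨y, rfl⟩ := (rTensor_exact A hiπ hπ z).1 hπz
  rw [lTensor_rTensor_comm_apply] at hz
  have hy : g.lTensor N₁ y = 0 :=
    Module.Flat.rTensor_preserves_injective_linearMap i hi (hz.trans (map_zero _).symm)
  rw [h₁ (hy.trans (map_zero _).symm), map_zero]

lemma lTensor_surjective_of_exact (hiπ : Function.Exact i π) (hπ : Function.Surjective π)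
    (h₁ : Function.Surjective (g.lTensor N₁)) (h₃ : Function.Surjective (g.lTensor N₃)) :
    Function.Surjective (g.lTensor N₂) := fun z => by
  obtain ⟨x₃, hx₃⟩ := h₃ (π.rTensor F z)
  obtain ⟨x, rfl⟩ := π.rTensor_surjective A hπ x₃
  rw [lTensor_rTensor_comm_apply] at hx₃
  obtain ⟨y, hy⟩ := (rTensor_exact F hiπ hπ (z - g.lTensor N₂ x)).1 <| by
    rw [map_sub, hx₃, sub_self]
  obtain ⟨w, rfl⟩ := h₁ y
  exact ⟨i.rTensor A w + x, by rw [map_add, lTensor_rTensor_comm_apply, hy, sub_add_cancel]⟩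

variable [IsNoetherianRing R] [Module.Flat R F] (N : Type u) [AddCommGroup N] [Module R N]
  [Module.Finite R N]

lemma lTensor_injective_of_forall_quotient_prime
    (hg : ∀ p : Ideal R, p.IsPrime → Module.annihilator R N ≤ p →
      Function.Injective (g.lTensor (R ⧸ p))) : Function.Injective (g.lTensor N) :=
  devissage_of_annihilator_le (motive := fun N _ _ _ => Function.Injective (g.lTensor N))
    (fun _ _ _ _ _ => Function.injective_of_subsingleton _)
    (fun _ _ _ _ _ _ _ _ _ _ _ _ _ _ hi hiπ hπ => lTensor_injective_of_exact g hi hiπ hπ) N hg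

lemma lTensor_bijective_of_forall_quotient_prime
    (hg : ∀ p : Ideal R, p.IsPrime → Module.annihilator R N ≤ p →
      Function.Bijective (g.lTensor (R ⧸ p))) : Function.Bijective (g.lTensor N) :=
  devissage_of_annihilator_le (motive := fun N _ _ _ => Function.Bijective (g.lTensor N))
    (fun _ _ _ _ _ => ⟨Function.injective_of_subsingleton _, Function.surjective_to_subsingleton _⟩)
    (fun _ _ _ _ _ _ _ _ _ _ _ _ _ _ hi hiπ hπ h₁ h₃ =>
      ⟨lTensor_injective_of_exact g hi hiπ hπ h₁.1 h₃.1,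
        lTensor_surjective_of_exact g hiπ hπ h₁.2 h₃.2⟩) N hg

end Devissage

section Localization

open TensorProduct

variable {R}

lemma quotient_one_tmul_eq_zero_iff_mem_smul_top {M : Type*} [AddCommGroup M] [Module R M]
    (I : Ideal R) (x : M) : (1 : R ⧸ I) ⊗ₜ[R] x = 0 ↔ x ∈ I • (⊤ : Submodule R M) := by
  rw [← (TensorProduct.quotTensorEquivQuotSMul M I).map_eq_zero_iff,
    TensorProduct.quotTensorEquivQuotSMul_mk_one_tmul, Submodule.Quotient.mk_eq_zero]

lemma quotient_tmul_surjective (M : Type*) [AddCommGroup M] [Module R M] (I : Ideal R) :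
    Function.Surjective fun x : M => (1 : R ⧸ I) ⊗ₜ[R] x :=
  TensorProduct.mk_surjective R M (R ⧸ I) Ideal.Quotient.mk_surjective

lemma smul_quotient_tmul_of_mem {M : Type*} [AddCommGroup M] [Module R M] {I : Ideal R} {a : R}
    (ha : a ∈ I) (z : (R ⧸ I) ⊗[R] M) : a • z = 0 := by
  obtain ⟨x, rfl⟩ := quotient_tmul_surjective M I z
  exact (TensorProduct.tmul_smul a 1 x).symm.trans <|
    (quotient_one_tmul_eq_zero_iff_mem_smul_top I _).2 (Submodule.smul_mem_smul ha trivial)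

lemma isSMulRegular_quotient_tensor_of_notMem (F : Type*) [AddCommGroup F] [Module R F]
    [Module.Flat R F] {q : Ideal R} [q.IsPrime] {s : R} (hs : s ∉ q) :
    IsSMulRegular ((R ⧸ q) ⊗[R] F) s :=
  IsSMulRegular.rTensor F <| (isSMulRegular_quotient_iff_mem_of_smul_mem q s).2 fun _ hx =>
    (Ideal.IsPrime.mem_or_mem ‹_› hx).resolve_left hs

lemma mem_smul_top_of_smul_mem {F : Type*} [AddCommGroup F] [Module R F] [Module.Flat R F]
    {q : Ideal R} [q.IsPrime] {s : R} (hs : s ∉ q) {x : F}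
    (hx : s • x ∈ q • (⊤ : Submodule R F)) : x ∈ q • (⊤ : Submodule R F) := by
  rw [← quotient_one_tmul_eq_zero_iff_mem_smul_top] at hx ⊢
  refine isSMulRegular_quotient_tensor_of_notMem F hs ?_
  simpa using hx

lemma exists_localization_hom_apply_one_eq {M : Type*} [AddCommGroup M] [Module R M]
    (S : Submonoid R) (hS : ∀ s ∈ S, IsSMulRegular M s) {x : M} (hx : ∀ s ∈ S, ∃ y, x = s • y) :
    ∃ g : Localization S →ₗ[R] M, g 1 = x := by
  let D : Submodule R M := ⨅ s : S, LinearMap.range (LinearMap.lsmul R M s)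
  have mem_D {z : M} : z ∈ D ↔ ∀ s ∈ S, ∃ y, z = s • y := by
    simp [D, Submodule.mem_iInf, eq_comm]
  have isUnit_smul (s : S) : IsUnit (algebraMap R (Module.End R D) s) := by
    refine (Module.End.isUnit_iff _).2 ⟨(hS s s.2).submodule D, fun z => ?_⟩
    obtain ⟨y, hy⟩ := mem_D.1 z.2 s s.2
    refine ⟨⟨y, mem_D.2 fun t ht => ?_⟩, Subtype.ext hy.symm⟩
    obtain ⟨w, hw⟩ := mem_D.1 z.2 (s * t) (mul_mem s.2 ht)
    exact ⟨w, hS s s.2 <| hy.symm.trans (hw.trans (mul_smul _ _ _))⟩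
  refine ⟨D.subtype ∘ₗ IsLocalizedModule.lift S (Algebra.linearMap R (Localization S))
    (LinearMap.toSpanSingleton R D ⟨x, mem_D.2 hx⟩) isUnit_smul, ?_⟩
  simpa using congr(($(IsLocalizedModule.lift_apply S (Algebra.linearMap R (Localization S))
    (LinearMap.toSpanSingleton R D ⟨x, mem_D.2 hx⟩) isUnit_smul 1) : M))

lemma exists_localization_smul_eq (S : Submonoid R) {s : R} (hs : s ∈ S) (y : Localization S) :
    ∃ v, s • v = y :=
  ⟨IsLocalization.mk' _ 1 ⟨s, hs⟩ * y, by
    rw [← smul_mul_assoc, IsLocalization.smul_mk'_one, IsLocalization.mk'_self, one_mul]⟩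

lemma exists_localization_eq_smul_of_smul_eq_one (S : Submonoid R) (y : Localization S) :
    ∃ a : R, ∃ s ∈ S, ∃ u : Localization S, y = a • u ∧ s • u = 1 := by
  obtain ⟨a, s, rfl⟩ := IsLocalization.exists_mk'_eq S y
  exact ⟨a, s, s.2, IsLocalization.mk' _ 1 s, by simp, by simp⟩

variable {F M : Type u} [AddCommGroup F] [Module R F] [AddCommGroup M] [Module R M]
  {q : Ideal R} [q.IsPrime]

lemma lTensor_quotient_injective_of_apply_one_notMem [Module.Flat R F]
    {g : Localization.AtPrime q →ₗ[R] F} (hg : g 1 ∉ q • (⊤ : Submodule R F)) (p : Ideal R)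
    [p.IsPrime] : Function.Injective (g.lTensor (R ⧸ p)) := by
  refine (injective_iff_map_eq_zero _).2 fun z hz => ?_
  obtain ⟨y, rfl⟩ := quotient_tmul_surjective _ p z
  obtain ⟨a, s, -, u, rfl, hu⟩ := exists_localization_eq_smul_of_smul_eq_one q.primeCompl y
  have hau : (1 : R ⧸ p) ⊗ₜ[R] (a • u) = a • (1 ⊗ₜ u) := TensorProduct.tmul_smul _ _ _
  by_cases hap : a ∈ p
  · exact hau.trans (smul_quotient_tmul_of_mem hap _)
  by_cases hpq : p ≤ q
  · refine absurd (Submodule.smul_mono_left hpq ?_) hg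
    rw [← quotient_one_tmul_eq_zero_iff_mem_smul_top, ← hu]
    have hgu : (1 : R ⧸ p) ⊗ₜ[R] g u = 0 := isSMulRegular_quotient_tensor_of_notMem F hap <| by
      simpa using hz
    simp [hgu]
  · obtain ⟨t, htp, htq⟩ := SetLike.not_le_iff_exists.1 hpq
    obtain ⟨v, hv⟩ := exists_localization_smul_eq q.primeCompl htq (a • u)
    rw [← hv]
    exact (TensorProduct.tmul_smul _ _ _).trans (smul_quotient_tmul_of_mem htp _)

variable [IsNoetherianRing R]

lemma injective_of_apply_one_notMem [Module.Flat R F]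
    {g : Localization.AtPrime q →ₗ[R] F} (hg : g 1 ∉ q • (⊤ : Submodule R F)) :
    Function.Injective g :=
  (Module.FaithfullyFlat.lTensor_injective_iff_injective R R g).1 <|
    lTensor_injective_of_forall_quotient_prime g R fun p _ _ =>
      lTensor_quotient_injective_of_apply_one_notMem hg p

lemma flat_quotient_range_of_apply_one_notMem [Module.Flat R F]
    {g : Localization.AtPrime q →ₗ[R] F} (hg : g 1 ∉ q • (⊤ : Submodule R F)) :
    Module.Flat R (F ⧸ LinearMap.range g) :=
  flat_of_exact_of_lTensor_quotient_injective g.exact_map_mkQ_range (Submodule.mkQ_surjective _)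
    fun I _ => lTensor_injective_of_forall_quotient_prime g (R ⧸ I) fun p _ _ =>
      lTensor_quotient_injective_of_apply_one_notMem hg p

lemma IsFlatCover.apply_one_mem_smul_top {p : F →ₗ[R] M} (hp : IsFlatCover R p)
    (hK : IsCotorsion R (LinearMap.ker p)) {g : Localization.AtPrime q →ₗ[R] F}
    (hpg : p ∘ₗ g = 0) : g 1 ∈ q • (⊤ : Submodule R F) := by
  by_contra hg
  have := hp.1.1
  have := flat_quotient_range_of_apply_one_notMem hg
  obtain ⟨e, he⟩ := hK.exists_extend (injective_of_apply_one_notMem hg) g.exact_map_mkQ_range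
    (Submodule.mkQ_surjective _) (g.codRestrict (LinearMap.ker p) fun y => congr($hpg y))
  let h : F →ₗ[R] F := LinearMap.id - (LinearMap.ker p).subtype ∘ₗ e
  have hbij : Function.Bijective h := hp.2 h <| LinearMap.ext fun x => by simp [h]
  have hhg : h (g 1) = 0 := sub_eq_zero.2 congr(($he 1 : F)).symm
  have hg0 : g 1 = 0 := (map_eq_zero_iff h hbij.1).1 hhg
  exact hg (hg0 ▸ zero_mem _)

end Localization

section Bijectivity

open TensorProduct

variable {R}

lemma quotient_span_singleton_one_tmul_eq_zero_iff {M : Type*} [AddCommGroup M] [Module R M]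
    (s : R) (x : M) : (1 : R ⧸ Ideal.span {s}) ⊗ₜ[R] x = 0 ↔ ∃ y, x = s • y := by
  rw [quotient_one_tmul_eq_zero_iff_mem_smul_top, Submodule.ideal_span_singleton_smul,
    Submodule.mem_smul_pointwise_iff_exists]
  simp [eq_comm]

lemma bijective_of_forall_localization_hom {M : Type u} [AddCommGroup M] [Module R M]
    (hM : IsCotorsion R M) (S : Submonoid R) (hS : ∀ s ∈ S, IsSMulRegular M s) {h : M →ₗ[R] M}
    (hfix : ∀ g : Localization S →ₗ[R] M, h (g 1) = g 1)
    (hbij : ∀ s ∈ S, Function.Bijective (h.lTensor (R ⧸ Ideal.span {s}))) :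
    Function.Bijective h := by
  have exists_smul_of_apply {s : R} (hs : s ∈ S) {x y : M} (hxy : h x = s • y) :
      ∃ z, x = s • z := by
    refine (quotient_span_singleton_one_tmul_eq_zero_iff s x).1 <| (hbij s hs).1 ?_
    rw [LinearMap.lTensor_tmul, map_zero, quotient_span_singleton_one_tmul_eq_zero_iff]
    exact ⟨y, hxy⟩
  have hinj : Function.Injective h := (injective_iff_map_eq_zero h).2 fun x hx => by
    obtain ⟨g, rfl⟩ := exists_localization_hom_apply_one_eq S hS fun s hs =>
      exists_smul_of_apply (y := 0) hs (by simpa using hx)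
    exact (hfix g).symm.trans hx
  refine ⟨hinj, fun y => ?_⟩
  let C := M ⧸ LinearMap.range h
  have hC (s : R) (hs : s ∈ S) : IsSMulRegular C s := by
    refine (isSMulRegular_quotient_iff_mem_of_smul_mem _ s).2 fun z ⟨x, hx⟩ => ?_
    obtain ⟨w, rfl⟩ := exists_smul_of_apply hs hx
    exact ⟨w, hS s hs (by simpa using hx)⟩
  have hdiv (s : R) (hs : s ∈ S) : ∃ c : C, Submodule.Quotient.mk y = s • c := by
    obtain ⟨t, ht⟩ := (hbij s hs).2 (1 ⊗ₜ y)
    obtain ⟨x, rfl⟩ := quotient_tmul_surjective M _ t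
    obtain ⟨z, hz⟩ := (quotient_span_singleton_one_tmul_eq_zero_iff s (y - h x)).1 <| by
      rw [TensorProduct.tmul_sub, ← ht, LinearMap.lTensor_tmul, sub_self]
    have hx : h x = y - s • z := by rw [← hz, sub_sub_cancel]
    exact ⟨Submodule.Quotient.mk z, (Submodule.Quotient.eq _).2 ⟨x, hx⟩⟩
  obtain ⟨γ, hγ⟩ := exists_localization_hom_apply_one_eq S hC hdiv
  have := IsLocalization.flat (Localization S) S
  obtain ⟨δ, rfl⟩ := hM.exists_lift hinj h.exact_map_mkQ_range (Submodule.mkQ_surjective _) γ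
  have hδ : (LinearMap.range h).mkQ (δ 1) = 0 :=
    (Submodule.Quotient.mk_eq_zero _).2 ⟨δ 1, hfix δ⟩
  exact (Submodule.Quotient.mk_eq_zero _).1 (hγ.symm.trans hδ)

variable [IsNoetherianRing R] {F : Type u} [AddCommGroup F] [Module R F] [Module.Flat R F]

lemma IsCotorsion.exists_lift_quotient_tmul (hF : IsCotorsion R F) (I : Ideal R) {G : Type u}
    [AddCommGroup G] [Module R G] [Module.Flat R G] (γ : G →ₗ[R] (R ⧸ I) ⊗[R] F) :
    ∃ δ : G →ₗ[R] F, ∀ x, γ x = 1 ⊗ₜ δ x := by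
  obtain ⟨δ, rfl⟩ := hF.exists_lift_rTensor I.mkQ_surjective γ
  refine ⟨(TensorProduct.lid R F).toLinearMap ∘ₗ δ, fun x => ?_⟩
  obtain ⟨y, hy⟩ := (TensorProduct.lid R F).symm.surjective (δ x)
  simp [← hy]

lemma lTensor_lTensor_quotient_bijective {h : F →ₗ[R] F} {q : Ideal R} {s : R}
    (hh : ∀ p : Ideal R, p.IsPrime → q ≤ p → s ∈ p → Function.Bijective (h.lTensor (R ⧸ p))) :
    Function.Bijective ((h.lTensor (R ⧸ q)).lTensor (R ⧸ Ideal.span {s})) := by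
  let N := (R ⧸ Ideal.span {s}) ⊗[R] (R ⧸ q)
  have hs : s ∈ Module.annihilator R N := Module.mem_annihilator.2
    (smul_quotient_tmul_of_mem (Ideal.mem_span_singleton_self s))
  have hq : q ≤ Module.annihilator R N := fun a ha => Module.mem_annihilator.2 fun z =>
    (TensorProduct.comm R _ _).injective <| by
      rw [map_smul, map_zero, smul_quotient_tmul_of_mem ha]
  have hN := lTensor_bijective_of_forall_quotient_prime h N fun p hp hNp =>
    hh p hp (hq.trans hNp) (hNp hs)
  rw [LinearMap.lTensor_tensor] at hN
  simpa using hN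

lemma IsCotorsion.bijective_of_forall_apply_one_sub_mem (hF : IsCotorsion R F) {h : F →ₗ[R] F}
    (hh : ∀ (q : Ideal R) [q.IsPrime] (g : Localization.AtPrime q →ₗ[R] F),
      h (g 1) - g 1 ∈ q • (⊤ : Submodule R F)) : Function.Bijective h := by
  suffices hbij : ∀ q : Ideal R, q.IsPrime → Function.Bijective (h.lTensor (R ⧸ q)) from
    (Module.FaithfullyFlat.lTensor_bijective_iff_bijective R R h).1 <|
      lTensor_bijective_of_forall_quotient_prime h R fun p hp _ => hbij p hp
  intro q
  induction q using WellFoundedGT.induction with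
  | ind q ih =>
  intro hq
  refine bijective_of_forall_localization_hom (hF.tensor_of_flat (R ⧸ q)) q.primeCompl
    (fun s hs => isSMulRegular_quotient_tensor_of_notMem F hs) (fun g => ?_) fun s hs =>
    lTensor_lTensor_quotient_bijective fun p hp hqp hsp =>
      ih p (lt_of_le_of_ne hqp fun hqp => hs (hqp ▸ hsp)) hp
  obtain ⟨δ, hδ⟩ := hF.exists_lift_quotient_tmul q g
  rw [hδ, LinearMap.lTensor_tmul, ← sub_eq_zero, ← TensorProduct.tmul_sub,
    quotient_one_tmul_eq_zero_iff_mem_smul_top]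
  exact hh q δ

end Bijectivity

section ResidueField

open TensorProduct

variable {R}

lemma lTensor_quotient_bijective_iff_ker_le {H H' : Type*} [AddCommGroup H] [Module R H]
    [AddCommGroup H'] [Module R H'] {φ : H →ₗ[R] H'} (hφ : Function.Surjective φ) (I : Ideal R) :
    Function.Bijective (φ.lTensor (R ⧸ I)) ↔ LinearMap.ker φ ≤ I • ⊤ := by
  refine ⟨fun hbij x hx => ?_, fun hker => ⟨?_, φ.lTensor_surjective _ hφ⟩⟩
  · rw [← quotient_one_tmul_eq_zero_iff_mem_smul_top]
    exact hbij.1 (by simp [LinearMap.mem_ker.1 hx])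
  · refine (injective_iff_map_eq_zero _).2 fun z hz => ?_
    obtain ⟨w, rfl⟩ := (lTensor_exact (R ⧸ I) φ.exact_subtype_ker_map hφ z).1 hz
    obtain ⟨k, rfl⟩ := quotient_tmul_surjective _ I w
    exact (quotient_one_tmul_eq_zero_iff_mem_smul_top I _).2 (hker k.2)

variable {F : Type u} [AddCommGroup F] [Module R F] {q : Ideal R} [q.IsPrime]
  {g : Localization.AtPrime q →ₗ[R] F}

lemma apply_one_mem_smul_top_of_mem_maximalIdeal_smul_top
    (hg : g ∈ IsLocalRing.maximalIdeal (Localization.AtPrime q) •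
      (⊤ : Submodule (Localization.AtPrime q) (Localization.AtPrime q →ₗ[R] F))) :
    g 1 ∈ q • (⊤ : Submodule R F) := by
  induction hg using Submodule.smul_induction_on' with
  | smul m hm f _ =>
    obtain ⟨a, s, -, u, rfl, hu⟩ := exists_localization_eq_smul_of_smul_eq_one q.primeCompl m
    have ha : a ∈ q := by
      rw [← IsLocalization.AtPrime.to_map_mem_maximal_iff (Localization.AtPrime q) q,
        Algebra.algebraMap_eq_smul_one, ← hu, smul_comm]
      exact Submodule.smul_of_tower_mem _ s hm
    have hf : ((a • u) • f) 1 = a • f u :=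
      (congrArg f (mul_one (a • u))).trans (map_smul f a u)
    rw [hf]
    exact Submodule.smul_mem_smul ha trivial
  | add f _ f' _ hf hf' => exact add_mem hf hf'

lemma lid_rTensor_eq_sum {n : ℕ} (φ : (Fin n → R) →ₗ[R] R) (z : (Fin n → R) ⊗[R] F) :
    TensorProduct.lid R F (φ.rTensor F z) = ∑ i, φ (Pi.single i 1) •
      TensorProduct.lid R F ((LinearMap.proj (φ := fun _ => R) i).rTensor F z) := by
  induction z with
  | zero => simp
  | add z w hz hw => simp [hz, hw, Finset.sum_add_distrib]
  | tmul v x =>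
    have hφ : φ v = ∑ i, v i • φ (Pi.single i 1) := by
      simpa only [map_sum, map_smul, Pi.basisFun_repr, Pi.basisFun_apply] using
        congrArg φ ((Pi.basisFun R (Fin n)).sum_repr v).symm
    simp [hφ, Finset.sum_smul, smul_smul, mul_comm]

variable [Module.Flat R F]

/-- Here `I` is written as a quotient of `R ^ n`, and `g` is lifted along `F ^ n → I ⊗ F`. -/
lemma IsCotorsion.exists_eq_sum_smul [IsNoetherianRing R] (hF : IsCotorsion R F) {I : Ideal R}
    {G : Type u} [AddCommGroup G] [Module R G] [Module.Flat R G] {g : G →ₗ[R] F}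
    (hg : ∀ x, g x ∈ I • (⊤ : Submodule R F)) :
    ∃ (n : ℕ) (a : Fin n → R) (δ : Fin n → G →ₗ[R] F), (∀ i, a i ∈ I) ∧
      ∀ x, g x = ∑ i, a i • δ i x := by
  let μ := (TensorProduct.lid R F).toLinearMap ∘ₗ I.subtype.rTensor F
  have hμ : Function.Injective μ := (TensorProduct.lid R F).injective.comp
    (Module.Flat.rTensor_preserves_injective_linearMap _ I.injective_subtype)
  let g' : G →ₗ[R] LinearMap.range μ :=
    g.codRestrict _ fun x => I.subtype_rTensor_range F ▸ hg x
  obtain ⟨γ, hγ⟩ : ∃ γ : G →ₗ[R] I ⊗[R] F, ∀ x, μ (γ x) = g x :=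
    ⟨(LinearEquiv.ofInjective μ hμ).symm.toLinearMap ∘ₗ g', fun x =>
      congr(($((LinearEquiv.ofInjective μ hμ).apply_symm_apply (g' x)) : F))⟩
  obtain ⟨n, π, hπ⟩ := Module.Finite.exists_fin' R I
  obtain ⟨δ, rfl⟩ := hF.exists_lift_rTensor hπ γ
  refine ⟨n, fun i => π (Pi.single i 1),
    fun i => (TensorProduct.lid R F).toLinearMap ∘ₗ (LinearMap.proj i).rTensor F ∘ₗ δ,
    fun i => (π _).2, fun x => ?_⟩
  rw [← hγ]
  refine Eq.trans ?_ (lid_rTensor_eq_sum (I.subtype ∘ₗ π) (δ x))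
  simp [μ, LinearMap.rTensor_comp_apply]

lemma apply_mem_smul_top_of_apply_one_mem (hg : g 1 ∈ q • (⊤ : Submodule R F))
    (y : Localization.AtPrime q) : g y ∈ q • (⊤ : Submodule R F) := by
  obtain ⟨a, s, hs, u, rfl, hu⟩ := exists_localization_eq_smul_of_smul_eq_one q.primeCompl y
  rw [map_smul]
  refine Submodule.smul_mem _ a (mem_smul_top_of_smul_mem hs ?_)
  rwa [← map_smul, hu]

lemma IsCotorsion.mem_maximalIdeal_smul_top_iff [IsNoetherianRing R] (hF : IsCotorsion R F) :
    g ∈ IsLocalRing.maximalIdeal (Localization.AtPrime q) •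
      (⊤ : Submodule (Localization.AtPrime q) (Localization.AtPrime q →ₗ[R] F)) ↔
    g 1 ∈ q • (⊤ : Submodule R F) := by
  refine ⟨apply_one_mem_smul_top_of_mem_maximalIdeal_smul_top, fun hg => ?_⟩
  have := IsLocalization.flat (Localization.AtPrime q) q.primeCompl
  obtain ⟨n, a, δ, ha, hgδ⟩ := hF.exists_eq_sum_smul (apply_mem_smul_top_of_apply_one_mem hg)
  have hg_sum : g = ∑ i, algebraMap R (Localization.AtPrime q) (a i) • δ i := by
    ext y
    rw [hgδ, LinearMap.sum_apply]
    exact Finset.sum_congr rfl fun i _ =>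
      (map_smul _ _ _).symm.trans <|
        congrArg (δ i) (algebraMap_smul (Localization.AtPrime q) (a i) y).symm
  rw [hg_sum]
  exact Submodule.sum_mem _ fun i _ => Submodule.smul_mem_smul
    ((IsLocalization.AtPrime.to_map_mem_maximal_iff _ q _).2 (ha i)) trivial

lemma IsFlatPrecover.bijective_residueField_iff [IsNoetherianRing R] {M : Type u} [AddCommGroup M]
    [Module R M] {p : F →ₗ[R] M} (hp : IsFlatPrecover R p) (hF : IsCotorsion R F) (q : Ideal R)
    [q.IsPrime] :
    Function.Bijective ((LinearMap.domHomPostcomp R (Localization.AtPrime q) p).lTensor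
        (IsLocalRing.ResidueField (Localization.AtPrime q))) ↔
      ∀ g : Localization.AtPrime q →ₗ[R] F, p ∘ₗ g = 0 → g 1 ∈ q • (⊤ : Submodule R F) := by
  have hsurj : Function.Surjective (LinearMap.domHomPostcomp R (Localization.AtPrime q) p) :=
    hp.2 _ (IsLocalization.flat _ q.primeCompl)
  refine (lTensor_quotient_bijective_iff_ker_le hsurj (IsLocalRing.maximalIdeal _)).trans ?_
  exact forall_congr' fun g => imp_congr Iff.rfl hF.mem_maximalIdeal_smul_top_iff

end ResidueField

lemma IsFlatPrecover.isFlatCover_iff_forall_localization_hom {R : Type u} [CommRing R]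
    [IsNoetherianRing R] {F M : Type u} [AddCommGroup F] [AddCommGroup M] [Module R F] [Module R M]
    {p : F →ₗ[R] M} (hp : IsFlatPrecover R p) (hF : IsCotorsion R F) :
    IsFlatCover R p ↔ ∀ (q : Ideal R) [q.IsPrime] (g : Localization.AtPrime q →ₗ[R] F),
      p ∘ₗ g = 0 → g 1 ∈ q • (⊤ : Submodule R F) := by
  have := hp.1
  refine ⟨fun h q _ g => h.apply_one_mem_smul_top (hp.isCotorsion_ker hF), fun h => ⟨hp, ?_⟩⟩
  refine fun e he => hF.bijective_of_forall_apply_one_sub_mem fun q _ g => ?_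
  refine h q (e ∘ₗ g - g) ?_
  rw [LinearMap.comp_sub, ← LinearMap.comp_assoc, he, sub_self]

/-- Dailey. Over a commutative Noetherian ring, an epimorphism
`p : F → M` with `F` flat and cotorsion is a flat cover iff `ker p` is cotorsion and
`k(𝔭) ⊗_{R_𝔭} Hom_R(R_𝔭, p)` is an isomorphism for every prime `𝔭`. -/
theorem flatCover_iff_cotorsion_ker_and_residue_bijective [IsNoetherianRing R]
    {F M : Type u} [AddCommGroup F] [AddCommGroup M] [Module R F] [Module R M]
    (p : F →ₗ[R] M) (hflat : Module.Flat R F) (hcot : IsCotorsion R F)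
    (hsurj : Function.Surjective p) :
    IsFlatCover R p ↔
      (IsCotorsion R (LinearMap.ker p) ∧
        ∀ (𝔭 : Ideal R) (h𝔭 : 𝔭.IsPrime),
          Function.Bijective
            (LinearMap.lTensor (IsLocalRing.ResidueField (Localization.AtPrime 𝔭))
              (LinearMap.domHomPostcomp R (Localization.AtPrime 𝔭) p))) := by
  have cover_iff (hp : IsFlatPrecover R p) :=
    (hp.isFlatCover_iff_forall_localization_hom hcot).trans
      (forall₂_congr fun 𝔭 _ => (hp.bijective_residueField_iff hcot 𝔭).symm)
  constructor
  · exact fun hp => ⟨hp.1.isCotorsion_ker hcot, (cover_iff hp.1).1 hp⟩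
  · exact fun ⟨hker, hbij⟩ => (cover_iff (isFlatPrecover_of_isCotorsion_ker hsurj hker)).2 hbij
end

section
/- Let S be a commutative ring. Then S is Noetherian if and only if for every morphism i of S-modules, i is an injective envelope precisely when i^+ := Hom_ℤ(i, ℚ/ℤ) is a flat cover. -/
universe u

variable (R : Type u) [CommRing R]

/-!
Over a Noetherian ring `N ⊗ E⁺ ≅ Hom(N, E)⁺` for finitely generated `N`, so Baer's criterion for
`E` is the ideal criterion for flatness of `E⁺`, and `i⁺` is a flat precover iff `i` is injective
and `E⁺` is flat. If `f ∘ i = i`, then `i⁺ ∘ f⁺ = i⁺`, so for a flat cover `i⁺` every such `f` is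
injective, which forces `i` to be essential.

Conversely, let `i⁺ ∘ h = i⁺` with `i` an injective envelope. By Noetherian induction on `I`, `h` is
bijective on `E⁺ ⧸ I E⁺`, which is dual to the `I`-torsion of `E`. If `a b ∈ I` with `a, b ∉ I`,
this follows from the larger ideals `I + (a)` and `(I : a)`. If `I` is prime, the `J`-torsion
submodules with `J > I` form a directed family, along which solutions of `h x = y` can be glued
since `ℚ/ℤ` is injective; on the characters vanishing on all of them, `h` is the identity modulo
`I E⁺` because the image of `i` is essential.

If every `E` is injective exactly when `E⁺` is flat, then direct sums of injectives are injective: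
`⨁ Eₙ → ∏ Eₙ` is pure, so its dual is a retraction. The Bass–Papp argument then gives the
ascending chain condition.
-/

open CharacterModule LinearMap TensorProduct

section CharacterDual

variable {R}
variable {A B C E N N' : Type*} [AddCommGroup A] [AddCommGroup B] [AddCommGroup C]
  [AddCommGroup E] [AddCommGroup N] [AddCommGroup N'] [Module R A] [Module R B]
  [Module R C] [Module R E] [Module R N] [Module R N']

theorem characterModule_sum_apply {ι : Type*} (s : Finset ι) (c : ι → CharacterModule A) (a : A) :
    (∑ i ∈ s, c i) a = ∑ i ∈ s, c i a :=
  AddMonoidHom.finsetSum_apply c s a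

theorem dual_id : dual (LinearMap.id : A →ₗ[R] A) = LinearMap.id := rfl

theorem dual_exact {f : A →ₗ[R] B} {g : B →ₗ[R] C} (hfg : Function.Exact f g) :
    Function.Exact (dual g) (dual f) := by
  intro c
  constructor
  · intro hc
    have hker : g.toAddMonoidHom.ker ≤ AddMonoidHom.ker c := by
      intro b hb
      obtain ⟨a, rfl⟩ := (hfg b).1 hb
      exact congr($hc a)
    obtain ⟨d, hd⟩ := dual_surjective_of_injective
      (QuotientAddGroup.kerLift g.toAddMonoidHom).toIntLinearMap
      (QuotientAddGroup.kerLift_injective _) (QuotientAddGroup.lift _ c hker)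
    exact ⟨d, CharacterModule.ext _ fun b ↦ DFunLike.congr_fun hd (QuotientAddGroup.mk b)⟩
  · rintro ⟨c, rfl⟩
    rw [← LinearMap.comp_apply, ← dual_comp, hfg.linearMap_comp_eq_zero, dual_zero,
      LinearMap.zero_apply]

/-- The natural map `N ⊗ E⁺ → Hom(N, E)⁺` sending `n ⊗ c` to `φ ↦ c (φ n)`. -/
noncomputable def tensorCharacterHom (N E : Type*) [AddCommGroup N] [AddCommGroup E] [Module R N]
    [Module R E] : N ⊗[R] CharacterModule E →ₗ[R] CharacterModule (N →ₗ[R] E) :=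
  TensorProduct.lift <| LinearMap.mk₂ R (fun n c ↦ dual (LinearMap.applyₗ n) c)
    (fun _ _ c ↦ CharacterModule.ext _ fun φ ↦ (congrArg c (map_add φ _ _)).trans (map_add c _ _))
    (fun r _ c ↦ CharacterModule.ext _ fun φ ↦ congrArg c (map_smul φ r _))
    (fun _ c c' ↦ map_add _ c c') (fun r _ c ↦ map_smul _ r c)

theorem tensorCharacterHom_comp_rTensor (f : N →ₗ[R] N') :
    tensorCharacterHom N' E ∘ₗ f.rTensor (CharacterModule E) =
      dual (f.lcomp R E) ∘ₗ tensorCharacterHom N E := by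
  ext n c φ
  rfl

theorem tensorCharacterHom_pi_bijective (ι : Type*) [Finite ι] :
    Function.Bijective (tensorCharacterHom (R := R) (ι → R) E) := by
  classical
  have := Fintype.ofFinite ι
  let inv : CharacterModule ((ι → R) →ₗ[R] E) →ₗ[R] (ι → R) ⊗[R] CharacterModule E :=
    ∑ i, TensorProduct.mk R _ _ (Pi.single i 1) ∘ₗ
      dual (LinearMap.smulRightₗ (LinearMap.proj i : (ι → R) →ₗ[R] R))
  refine Function.bijective_iff_has_inverse.2 ⟨inv, fun t ↦ ?_, fun c ↦ ?_⟩
  · suffices inv ∘ₗ tensorCharacterHom (ι → R) E = LinearMap.id from congr($this t)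
    ext i c
    have hcoord (j : ι) : dual (LinearMap.smulRightₗ (LinearMap.proj j : (ι → R) →ₗ[R] R))
        (tensorCharacterHom (ι → R) E (Pi.single i 1 ⊗ₜ c)) = if j = i then c else 0 := by
      refine CharacterModule.ext _ fun e ↦ ?_
      change c ((Pi.single i 1 : ι → R) j • e) = _
      obtain rfl | hj := eq_or_ne j i
      · rw [Pi.single_eq_same, one_smul, if_pos rfl]
      · rw [Pi.single_eq_of_ne hj, zero_smul, map_zero, if_neg hj]; rfl
    change inv (tensorCharacterHom (ι → R) E (Pi.single i 1 ⊗ₜ c)) = Pi.single i 1 ⊗ₜ c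
    simp only [inv, LinearMap.sum_apply, LinearMap.comp_apply, hcoord, TensorProduct.mk_apply,
      tmul_ite, Finset.sum_ite_eq', Finset.mem_univ, if_true]
  · refine CharacterModule.ext _ fun φ ↦ ?_
    have hφ : ∑ i, (LinearMap.smulRightₗ (LinearMap.proj i : (ι → R) →ₗ[R] R))
        (φ (Pi.single i 1)) = φ := by
      ext j
      simp [Pi.single_apply]
    conv_rhs => rw [← hφ, map_sum]
    simp only [inv, LinearMap.sum_apply, map_sum]
    rw [characterModule_sum_apply]
    rfl

theorem tensorCharacterHom_bijective [Module.FinitePresentation R N] :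
    Function.Bijective (tensorCharacterHom (R := R) N E) := by
  obtain ⟨n, m, f, g, hf, hfg⟩ := Module.FinitePresentation.exists_fin' R N
  exact bijective_of_surjective_of_bijective_of_right_exact
    (g.rTensor (CharacterModule E)) (f.rTensor (CharacterModule E))
    (dual (g.lcomp R E)) (dual (f.lcomp R E)) _ _ _
    (tensorCharacterHom_comp_rTensor g).symm (tensorCharacterHom_comp_rTensor f).symm
    (rTensor_exact _ hfg hf) (dual_exact (exact_lcomp_of_exact_of_surjective _ hfg hf))
    (tensorCharacterHom_pi_bijective _).2 (tensorCharacterHom_pi_bijective _)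
    (rTensor_surjective _ hf) (dual_surjective_of_injective _ (lcomp_injective_of_surjective _ hf))

theorem rTensor_characterModule_injective_iff_lcomp_surjective [Module.FinitePresentation R N]
    [Module.FinitePresentation R N'] (f : N →ₗ[R] N') :
    Function.Injective (f.rTensor (CharacterModule E)) ↔ Function.Surjective (f.lcomp R E) := by
  rw [← dual_injective_iff_surjective, ← tensorCharacterHom_bijective.injective.of_comp_iff,
    ← LinearMap.coe_comp, tensorCharacterHom_comp_rTensor, LinearMap.coe_comp,
    Function.Injective.of_comp_iff' _ tensorCharacterHom_bijective]

universe v in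
theorem injective_iff_flat_characterModule [IsNoetherianRing R] {E : Type v} [AddCommGroup E]
    [Module R E] [Small.{v} R] :
    Module.Injective R E ↔ Module.Flat R (CharacterModule E) := by
  rw [← Module.Baer.iff_injective, Module.Baer.iff_surjective, Module.Flat.iff_rTensor_injective']
  have (I : Ideal R) := Module.finitePresentation_of_finite R I
  exact forall_congr' fun I ↦
    (rTensor_characterModule_injective_iff_lcomp_surjective (Submodule.subtype I)).symm

theorem exists_dual_comp_eq {f : A →ₗ[R] B} (hf : Function.Injective (f.lTensor N))
    (g : N →ₗ[R] CharacterModule A) : ∃ k : N →ₗ[R] CharacterModule B, dual f ∘ₗ k = g := by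
  obtain ⟨ψ, hψ⟩ := dual_surjective_of_injective (f.lTensor N) hf (homEquiv g)
  refine ⟨homEquiv.symm ψ, ?_⟩
  ext n a
  exact congr($hψ (n ⊗ₜ a))

end CharacterDual

section FlatPrecover

variable {R}
variable {M E : Type u} [AddCommGroup M] [Module R M] [AddCommGroup E] [Module R E]

theorem isFlatPrecover_dual_iff {i : M →ₗ[R] E} :
    IsFlatPrecover R (dual i) ↔ Function.Injective i ∧ Module.Flat R (CharacterModule E) := by
  refine ⟨fun h ↦ ⟨dual_surjective_iff_injective.1 fun c ↦ ?_, h.1⟩, fun ⟨hi, hE⟩ ↦ ⟨hE, ?_⟩⟩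
  · obtain ⟨k, hk⟩ := h.2 R inferInstance (LinearMap.toSpanSingleton R _ c)
    exact ⟨k 1, by simpa using congr($hk 1)⟩
  · intro F _ _ _ g
    exact exists_dual_comp_eq (Module.Flat.lTensor_preserves_injective_linearMap i hi) g

theorem isFlatCover_id_iff {F : Type u} [AddCommGroup F] [Module R F] :
    IsFlatCover R (LinearMap.id : F →ₗ[R] F) ↔ Module.Flat R F := by
  refine ⟨fun h ↦ h.1.1, fun hF ↦ ⟨⟨hF, fun F' _ _ _ g ↦ ⟨g, rfl⟩⟩, fun h hh ↦ ?_⟩⟩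
  obtain rfl : h = LinearMap.id := hh
  exact Function.bijective_id

theorem isInjectiveEnvelope_id_iff :
    IsInjectiveEnvelope R (LinearMap.id : E →ₗ[R] E) ↔ Module.Injective R E :=
  ⟨fun h ↦ h.1, fun hE ↦ ⟨hE, Function.injective_id, fun N hN ↦ by
    rwa [LinearMap.range_id, inf_top_eq]⟩⟩

theorem inf_range_ne_bot_of_forall_injective [Module.Injective R E] {i : M →ₗ[R] E}
    (hi : Function.Injective i) (h : ∀ f : E →ₗ[R] E, f ∘ₗ i = i → Function.Injective f)
    {N : Submodule R E} (hN : N ≠ ⊥) : N ⊓ LinearMap.range i ≠ ⊥ := by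
  contrapose! hN
  have hinj : Function.Injective (N.mkQ ∘ₗ i) := by
    refine (injective_iff_map_eq_zero _).2 fun m hm ↦ (map_eq_zero_iff i hi).1 ?_
    have hm' : i m ∈ N ⊓ LinearMap.range i := ⟨(Submodule.Quotient.mk_eq_zero N).1 hm, m, rfl⟩
    rwa [hN, Submodule.mem_bot] at hm'
  obtain ⟨k, hk⟩ := Module.Injective.out (N.mkQ ∘ₗ i) hinj i
  have hretract : Function.Injective (k ∘ₗ N.mkQ) := h _ (LinearMap.ext hk)
  rw [eq_bot_iff, ← LinearMap.ker_eq_bot.2 hretract, LinearMap.ker_comp]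
  exact N.ker_mkQ.ge.trans (LinearMap.ker_le_comap _)

end FlatPrecover

section CharacterAnnihilator

variable {R}
variable {E : Type*} [AddCommGroup E] [Module R E]

/-- The characters of `E` that vanish on `N`, as a submodule of `E⁺`. -/
def characterAnnihilator (N : Submodule R E) : Submodule R (CharacterModule E) :=
  LinearMap.ker (dual N.subtype)

theorem mem_characterAnnihilator {N : Submodule R E} {c : CharacterModule E} :
    c ∈ characterAnnihilator N ↔ ∀ e ∈ N, c e = 0 :=
  ⟨fun h e he ↦ congr($h ⟨e, he⟩), fun h ↦ CharacterModule.ext N fun e ↦ h e e.2⟩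

theorem characterAnnihilator_anti {N N' : Submodule R E} (h : N ≤ N') :
    characterAnnihilator N' ≤ characterAnnihilator N := fun _ hc ↦
  mem_characterAnnihilator.2 fun e he ↦ mem_characterAnnihilator.1 hc e (h he)

theorem characterAnnihilator_iSup {ι : Sort*} (N : ι → Submodule R E) :
    characterAnnihilator (⨆ i, N i) = ⨅ i, characterAnnihilator (N i) := by
  refine le_antisymm (le_iInf fun i ↦ characterAnnihilator_anti (le_iSup N i)) fun c hc ↦ ?_
  rw [Submodule.mem_iInf] at hc
  refine mem_characterAnnihilator.2 fun e he ↦ ?_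
  induction he using Submodule.iSup_induction' with
  | mem i e he => exact mem_characterAnnihilator.1 (hc i) e he
  | zero => exact map_zero c
  | add e e' _ _ he he' => rw [map_add, he, he', add_zero]

theorem smul_top_eq_characterAnnihilator {I : Ideal R} (hI : I.FG) :
    I • ⊤ = characterAnnihilator (Submodule.torsionBySet R E I) := by
  refine le_antisymm (Submodule.smul_le.2 fun r hr c _ ↦ mem_characterAnnihilator.2 fun e he ↦ ?_)
    fun c hc ↦ ?_
  · rw [CharacterModule.smul_apply, (Submodule.mem_torsionBySet_iff _ e).1 he ⟨r, hr⟩, map_zero]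
  obtain ⟨n, a, rfl⟩ := Submodule.fg_iff_exists_fin_generating_family.1 hI
  let mulGens : E →ₗ[R] (Fin n → E) := LinearMap.pi fun j ↦ LinearMap.lsmul R E (a j)
  have hexact : Function.Exact
      (Submodule.torsionBySet R E (Ideal.span (Set.range a))).subtype mulGens := by
    intro e
    rw [← Submodule.torsionBySet_eq_torsionBySet_span]
    simp [mulGens, funext_iff]
  obtain ⟨ψ, rfl⟩ := (dual_exact hexact c).1 hc
  have hsum : dual mulGens ψ = ∑ j, a j • dual (LinearMap.single R (fun _ ↦ E) j) ψ := by
    refine CharacterModule.ext _ fun e ↦ ?_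
    have he : mulGens e = ∑ j, Pi.single j (a j • e) := (Finset.univ_sum_single (mulGens e)).symm
    change ψ (mulGens e) = _
    rw [he, map_sum, characterModule_sum_apply]
    rfl
  rw [hsum]
  exact Submodule.sum_mem _ fun j _ ↦
    Submodule.smul_mem_smul (Ideal.subset_span ⟨j, rfl⟩) Submodule.mem_top

theorem exists_sub_mem_characterAnnihilator_of_directed {ι : Type*} {N : ι → Submodule R E}
    (hN : Directed (· ≤ ·) N) (x : ι → CharacterModule E)
    (hx : ∀ i j, N i ≤ N j → x i - x j ∈ characterAnnihilator (N i)) :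
    ∃ c : CharacterModule E, ∀ i, c - x i ∈ characterAnnihilator (N i) := by
  let f (i : ι) : E →ₗ.[ℤ] AddCircle (1 : ℚ) :=
    ⟨(N i).restrictScalars ℤ, (AddMonoidHom.toIntLinearMap (x i)).domRestrict _⟩
  have hle {i j : ι} (h : N i ≤ N j) : f i ≤ f j := by
    refine ⟨h, fun e e' he ↦ ?_⟩
    change x i e = x j e'
    rw [← he]
    exact sub_eq_zero.1 (mem_characterAnnihilator.1 (hx i j h) e e.2)
  have hf : DirectedOn (· ≤ ·) (Set.range f) := directedOn_range.2 fun i j ↦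
    let ⟨k, hi, hj⟩ := hN i j
    ⟨k, hle hi, hle hj⟩
  obtain ⟨c, hc⟩ := dual_surjective_of_injective (LinearPMap.sSup _ hf).domain.subtype
    (Submodule.injective_subtype _) (LinearPMap.sSup _ hf).toFun.toAddMonoidHom
  refine ⟨c, fun i ↦ mem_characterAnnihilator.2 fun e he ↦ sub_eq_zero.2 ?_⟩
  have hi : f i ≤ LinearPMap.sSup _ hf := LinearPMap.le_sSup hf ⟨i, rfl⟩
  exact (congr($hc ⟨e, hi.1 he⟩)).trans (hi.2 (x := ⟨e, he⟩) rfl).symm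

end CharacterAnnihilator

section BijectiveModulo

variable {R}
variable {X : Type*} [AddCommGroup X] [Module R X]

/-- `h` induces a bijection of `X ⧸ N` onto itself, phrased without passing to the quotient. -/
structure IsBijectiveModulo (N : Submodule R X) (h : X →ₗ[R] X) : Prop where
  map_mem_iff : ∀ x, h x ∈ N ↔ x ∈ N
  exists_map_sub_mem : ∀ y, ∃ x, h x - y ∈ N

namespace IsBijectiveModulo

variable {h : X →ₗ[R] X}

theorem bijective (H : IsBijectiveModulo ⊥ h) : Function.Bijective h := by
  refine ⟨(injective_iff_map_eq_zero h).2 fun x hx ↦ (H.map_mem_iff x).1 hx, fun y ↦ ?_⟩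
  obtain ⟨x, hx⟩ := H.exists_map_sub_mem y
  exact ⟨x, sub_eq_zero.1 hx⟩

theorem top : IsBijectiveModulo ⊤ h where
  map_mem_iff _ := iff_of_true trivial trivial
  exists_map_sub_mem _ := ⟨0, trivial⟩

theorem of_le {N N' : Submodule R X} (H : IsBijectiveModulo N' h) (hle : N ≤ N')
    (hN : ∀ x ∈ N', h x - x ∈ N) : IsBijectiveModulo N h where
  map_mem_iff x := by
    refine ⟨fun hx ↦ ?_, fun hx ↦ ?_⟩
    · simpa using N.sub_mem hx (hN x ((H.map_mem_iff x).1 (hle hx)))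
    · simpa using N.add_mem hx (hN x (hle hx))
  exists_map_sub_mem y := by
    obtain ⟨x, hx⟩ := H.exists_map_sub_mem y
    refine ⟨x - (h x - y), ?_⟩
    convert N.neg_mem (hN _ hx) using 1
    rw [map_sub]
    abel

end IsBijectiveModulo

theorem map_mem_smul_top (h : X →ₗ[R] X) {I : Ideal R} {x : X}
    (hx : x ∈ I • (⊤ : Submodule R X)) : h x ∈ I • (⊤ : Submodule R X) :=
  Submodule.smul_top_le_comap_smul_top I h hx

theorem mem_sup_span_singleton_smul_top {I : Ideal R} {a : R} {x : X} :
    x ∈ (I ⊔ Ideal.span {a}) • (⊤ : Submodule R X) ↔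
      ∃ u ∈ I • (⊤ : Submodule R X), ∃ z, u + a • z = x := by
  simp only [Submodule.sup_smul, Submodule.mem_sup, Submodule.ideal_span_singleton_smul,
    Submodule.mem_smul_pointwise_iff_exists, Submodule.mem_top, true_and, exists_exists_eq_and]

theorem smul_mem_smul_top_iff_of_flat [Module.Flat R X] {I : Ideal R} {a : R} {x : X} :
    a • x ∈ I • (⊤ : Submodule R X) ↔ x ∈ I.colon {a} • (⊤ : Submodule R X) := by
  refine ⟨fun hx ↦ ?_, fun hx ↦ ?_⟩
  · rw [← Submodule.span_univ, ← Set.range_id, Submodule.mem_ideal_smul_span_iff_exists_sum] at hx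
    obtain ⟨c, hc, hcx⟩ := hx
    let f : Option c.support → R := fun o ↦ o.elim a fun y ↦ -c y
    let v : Option c.support → X := fun o ↦ o.elim x fun y ↦ y
    have hrel : ∑ o, f o • v o = 0 := by
      simp only [f, v, Fintype.sum_option, Option.elim, neg_smul, Finset.sum_neg_distrib]
      rw [← hcx, Finsupp.sum, Finset.sum_coe_sort c.support fun y ↦ c y • y]
      exact add_neg_cancel _
    obtain ⟨k, b, y, hv, hb⟩ := Module.Flat.isTrivialRelation_of_sum_smul_eq_zero hrel
    rw [show x = ∑ j, b none j • y j from hv none]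
    refine Submodule.sum_mem _ fun j _ ↦
      Submodule.smul_mem_smul (Submodule.mem_colon_singleton.2 ?_) Submodule.mem_top
    have hbj : a * b none j = ∑ y : c.support, c y * b (some y) j := by
      simpa [f, Fintype.sum_option, add_neg_eq_zero] using hb j
    rw [smul_eq_mul, mul_comm, hbj]
    exact I.sum_mem fun y _ ↦ I.mul_mem_right _ (hc y)
  · refine Submodule.smul_induction_on hx (fun r hr y _ ↦ ?_) fun y z hy hz ↦ ?_
    · rw [← mul_smul, mul_comm]
      exact Submodule.smul_mem_smul (Submodule.mem_colon_singleton.1 hr) Submodule.mem_top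
    · rw [smul_add]
      exact Submodule.add_mem _ hy hz

/- The two ends of `0 → X ⧸ (I : a)X → X ⧸ IX → X ⧸ (I + (a))X → 0` determine the middle; flatness
gives exactness on the left. -/
theorem IsBijectiveModulo.of_sup_span_singleton_of_colon [Module.Flat R X] {h : X →ₗ[R] X}
    {I : Ideal R} {a : R} (hsup : IsBijectiveModulo ((I ⊔ Ideal.span {a}) • ⊤) h)
    (hcolon : IsBijectiveModulo (I.colon {a} • ⊤) h) : IsBijectiveModulo (I • ⊤) h where
  map_mem_iff x := by
    refine ⟨fun hx ↦ ?_, map_mem_smul_top h⟩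
    have hx' : x ∈ (I ⊔ Ideal.span {a}) • (⊤ : Submodule R X) :=
      (hsup.map_mem_iff x).1 (Submodule.smul_mono_left le_sup_left hx)
    obtain ⟨u, hu, z, rfl⟩ := mem_sup_span_singleton_smul_top.1 hx'
    have haz : a • h z ∈ I • (⊤ : Submodule R X) := by
      rw [map_add, map_smul] at hx
      exact (Submodule.add_mem_iff_right _ (map_mem_smul_top h hu)).1 hx
    have hz := (hcolon.map_mem_iff z).1 (smul_mem_smul_top_iff_of_flat.1 haz)
    exact Submodule.add_mem _ hu (smul_mem_smul_top_iff_of_flat.2 hz)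
  exists_map_sub_mem y := by
    obtain ⟨x, hx⟩ := hsup.exists_map_sub_mem y
    obtain ⟨u, hu, z, hz⟩ := mem_sup_span_singleton_smul_top.1 hx
    obtain ⟨w, hw⟩ := hcolon.exists_map_sub_mem z
    refine ⟨x - a • w, ?_⟩
    convert Submodule.sub_mem _ hu (smul_mem_smul_top_iff_of_flat.2 hw) using 1
    rw [map_sub, map_smul, sub_right_comm, ← hz, smul_sub]
    abel

theorem bijective_of_forall_isPrime [IsNoetherianRing R] [Module.Flat R X] {h : X →ₗ[R] X}
    (H : ∀ p : Ideal R, p.IsPrime → (∀ J > p, IsBijectiveModulo (J • ⊤) h) →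
      IsBijectiveModulo (p • ⊤) h) : Function.Bijective h := by
  suffices hall : ∀ I : Ideal R, IsBijectiveModulo (I • ⊤) h by
    have hbot := hall ⊥
    rw [Submodule.bot_smul] at hbot
    exact hbot.bijective
  refine IsNoetherian.induction fun (I : Ideal R) ih ↦ ?_
  by_cases hI : I.IsPrime
  · exact H I hI ih
  obtain rfl | ⟨a, ha, b, hb, hab⟩ := Ideal.not_isPrime_iff.1 hI
  · rw [Submodule.top_smul]
    exact .top
  refine .of_sup_span_singleton_of_colon (ih _ ?_) (ih (I.colon {a}) ?_)
  · exact left_lt_sup.2 fun h ↦ ha (h (Ideal.mem_span_singleton_self a))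
  · refine SetLike.lt_iff_le_and_exists.2 ⟨fun r hr ↦ ?_, b, ?_, hb⟩
    · exact Submodule.mem_colon_singleton.2 (I.mul_mem_right a hr)
    · rwa [Submodule.mem_colon_singleton, smul_eq_mul, mul_comm]

end BijectiveModulo

section Essential

variable {R}
variable {E : Type*} [AddCommGroup E] [Module R E]

theorem IsBijectiveModulo.characterAnnihilator_iSup_of_directed {ι : Type*} {N : ι → Submodule R E}
    (hN : Directed (· ≤ ·) N) {h : CharacterModule E →ₗ[R] CharacterModule E}
    (H : ∀ i, IsBijectiveModulo (characterAnnihilator (N i)) h) :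
    IsBijectiveModulo (characterAnnihilator (⨆ i, N i)) h where
  map_mem_iff x := by
    simp only [characterAnnihilator_iSup, Submodule.mem_iInf, (H _).map_mem_iff]
  exists_map_sub_mem y := by
    choose x hx using fun i ↦ (H i).exists_map_sub_mem y
    have hcompat (i j : ι) (hij : N i ≤ N j) : x i - x j ∈ characterAnnihilator (N i) := by
      rw [← (H i).map_mem_iff, map_sub, ← sub_sub_sub_cancel_right _ _ y]
      exact Submodule.sub_mem _ (hx i) (characterAnnihilator_anti hij (hx j))
    obtain ⟨c, hc⟩ := exists_sub_mem_characterAnnihilator_of_directed hN x hcompat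
    refine ⟨c, ?_⟩
    rw [characterAnnihilator_iSup, Submodule.mem_iInf]
    intro i
    rw [← sub_add_sub_cancel _ (h (x i)), ← map_sub]
    exact Submodule.add_mem _ (((H i).map_mem_iff _).2 (hc i)) (hx i)

theorem exists_notMem_smul_mem_of_essential {K : Submodule R E} (hK : ∀ N ≠ ⊥, N ⊓ K ≠ ⊥)
    {I : Ideal R} (hI : I ≠ ⊤) {e : E} (he : e ∈ Submodule.torsionBySet R E I) :
    ∃ s ∉ I, s • e ∈ K := by
  obtain rfl | he0 := eq_or_ne e 0
  · exact ⟨1, I.ne_top_iff_one.1 hI, by simp⟩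
  · obtain ⟨v, ⟨hv, hvK⟩, hv0⟩ := Submodule.exists_mem_ne_zero_of_ne_bot
      (hK (R ∙ e) (by simpa using he0))
    obtain ⟨s, rfl⟩ := Submodule.mem_span_singleton.1 hv
    exact ⟨s, fun hs ↦ hv0 ((Submodule.mem_torsionBySet_iff _ e).1 he ⟨s, hs⟩), hvK⟩

theorem directed_torsionBySet_of_isPrime {p : Ideal R} (hp : p.IsPrime) :
    Directed (· ≤ ·) fun J : Set.Ioi p ↦ Submodule.torsionBySet R E (J : Ideal R) := by
  rintro ⟨J, hJ⟩ ⟨J', hJ'⟩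
  have hlt : p < J ⊓ J' := (le_inf hJ.le hJ'.le).lt_of_not_ge fun hle ↦
    (hp.inf_le.1 hle).elim hJ.not_ge hJ'.not_ge
  exact ⟨⟨J ⊓ J', hlt⟩, Submodule.torsionBySet_le_torsionBySet_of_subset fun _ h ↦ h.1,
    Submodule.torsionBySet_le_torsionBySet_of_subset fun _ h ↦ h.2⟩

variable [IsNoetherianRing R] {K : Submodule R E} {h : CharacterModule E →ₗ[R] CharacterModule E}

theorem map_sub_self_mem_of_forall_gt (hK : ∀ N ≠ ⊥, N ⊓ K ≠ ⊥)
    (hh : ∀ c, h c - c ∈ characterAnnihilator K) {I : Ideal R} (hI : I ≠ ⊤)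
    {c : CharacterModule E} (hc : ∀ J > I, c ∈ J • (⊤ : Submodule R (CharacterModule E))) :
    h c - c ∈ I • (⊤ : Submodule R (CharacterModule E)) := by
  rw [smul_top_eq_characterAnnihilator (IsNoetherian.noetherian I), mem_characterAnnihilator]
  intro e he
  obtain ⟨s, hs, hse⟩ := exists_notMem_smul_mem_of_essential hK hI he
  have hlt : I < I ⊔ Ideal.span {s} :=
    left_lt_sup.2 fun h ↦ hs (h (Ideal.mem_span_singleton_self s))
  obtain ⟨u, hu, z, rfl⟩ := mem_sup_span_singleton_smul_top.1 (hc _ hlt)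
  have hue : (h u - u) e = 0 := by
    have := Submodule.sub_mem _ (map_mem_smul_top h hu) hu
    rw [smul_top_eq_characterAnnihilator (IsNoetherian.noetherian I)] at this
    exact mem_characterAnnihilator.1 this e he
  have hze : (h z - z) (s • e) = 0 := mem_characterAnnihilator.1 (hh z) _ hse
  have hsplit : h (u + s • z) - (u + s • z) = (h u - u) + s • (h z - z) := by
    rw [map_add, map_smul, smul_sub]
    abel
  rw [hsplit]
  exact (congrArg₂ (· + ·) hue hze).trans (add_zero 0)

theorem bijective_of_forall_map_sub_self_mem [Module.Flat R (CharacterModule E)]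
    (hK : ∀ N ≠ ⊥, N ⊓ K ≠ ⊥) (hh : ∀ c, h c - c ∈ characterAnnihilator K) :
    Function.Bijective h := by
  refine bijective_of_forall_isPrime fun p hp ih ↦ ?_
  have hsmul (J : Ideal R) :=
    smul_top_eq_characterAnnihilator (E := E) (IsNoetherian.noetherian J)
  have hglue : IsBijectiveModulo (characterAnnihilator
      (⨆ J : Set.Ioi p, Submodule.torsionBySet R E (J : Ideal R))) h :=
    .characterAnnihilator_iSup_of_directed (directed_torsionBySet_of_isPrime hp) fun J ↦
      hsmul J ▸ ih J J.2
  refine hglue.of_le ?_ fun c hc ↦ map_sub_self_mem_of_forall_gt hK hh hp.ne_top fun J hJ ↦ ?_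
  · rw [hsmul p]
    exact characterAnnihilator_anti (iSup_le fun J ↦
      Submodule.torsionBySet_le_torsionBySet_of_subset J.2.le)
  · rw [hsmul J]
    exact characterAnnihilator_anti
      (le_iSup (fun J : Set.Ioi p ↦ Submodule.torsionBySet R E (J : Ideal R)) ⟨J, hJ⟩) hc

end Essential

section BassPapp

variable {R}

open scoped DirectSum

theorem lTensor_directSum_coeFnLinearMap_injective {ι : Type*} (N : Type*) (E : ι → Type*)
    [AddCommGroup N] [Module R N] [∀ i, AddCommGroup (E i)] [∀ i, Module R (E i)] :
    Function.Injective ((DirectSum.coeFnLinearMap R (M := E)).lTensor N) := by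
  classical
  have hcomp (i : ι) : DirectSum.component R ι (fun i ↦ N ⊗[R] E i) i ∘ₗ
      (TensorProduct.directSumRight R R N E).toLinearMap =
        (LinearMap.proj i).lTensor N ∘ₗ (DirectSum.coeFnLinearMap R (M := E)).lTensor N := by
    rw [← LinearMap.lTensor_comp]
    exact TensorProduct.ext' fun n e ↦ TensorProduct.directSumRight_tmul R R n e i
  refine fun t t' htt' ↦ (TensorProduct.directSumRight R R N E).injective (DFinsupp.ext fun i ↦ ?_)
  exact (congr($(hcomp i) t).trans congr((LinearMap.proj i).lTensor N $htt')).trans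
    congr($(hcomp i) t').symm

theorem flat_characterModule_directSum {ι : Type*} (E : ι → Type*) [∀ i, AddCommGroup (E i)]
    [∀ i, Module R (E i)] [Module.Flat R (CharacterModule (∀ i, E i))] :
    Module.Flat R (CharacterModule (⨁ i, E i)) := by
  obtain ⟨k, hk⟩ := exists_dual_comp_eq (lTensor_directSum_coeFnLinearMap_injective (R := R)
    (CharacterModule (⨁ i, E i)) E) LinearMap.id
  exact .of_retract k _ hk

theorem exists_injective_linearMap_to_injective (M : Type u) [AddCommGroup M] [Module R M] :
    ∃ (E : Type u) (_ : AddCommGroup E) (_ : Module R E) (j : M →ₗ[R] E),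
      Module.Injective R E ∧ Function.Injective j :=
  let E : ModuleCat R := CategoryTheory.Injective.under (ModuleCat.of R M)
  have : CategoryTheory.Injective (ModuleCat.of R E) :=
    CategoryTheory.Injective.injective_under (ModuleCat.of R M)
  ⟨E, inferInstance, inferInstance, (CategoryTheory.Injective.ι (ModuleCat.of R M)).hom,
    Module.injective_module_of_injective_object R E,
    (ModuleCat.mono_iff_injective _).1 inferInstance⟩

theorem exists_directSum_lift {ι M : Type*} {E : ι → Type*} [AddCommGroup M] [Module R M]
    [∀ i, AddCommGroup (E i)] [∀ i, Module R (E i)] (f : ∀ i, M →ₗ[R] E i)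
    (hf : ∀ m, {i | f i m ≠ 0}.Finite) : ∃ g : M →ₗ[R] ⨁ i, E i, ∀ m i, g m i = f i m := by
  classical
  choose g hg using fun m ↦ show ∃ x : ⨁ i, E i, ∀ i, x i = f i m from
    ⟨.mk _ (hf m).toFinset fun i ↦ f i m, fun i ↦ by
      simp +contextual [DirectSum.mk, DFinsupp.mk_apply, eq_comm]⟩
  exact ⟨{ toFun := g
           map_add' m m' := by ext i; simp [hg]
           map_smul' r m := by ext i; simp [hg, DirectSum.smul_apply] }, hg⟩

theorem isNoetherianRing_of_forall_injective_directSum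
    (H : ∀ (E : ℕ → Type u) [∀ n, AddCommGroup (E n)] [∀ n, Module R (E n)]
      [∀ n, Module.Injective R (E n)], Module.Injective R (⨁ n, E n)) :
    IsNoetherianRing R := by
  rw [isNoetherianRing_iff, ← monotone_stabilizes_iff_noetherian]
  intro I
  choose E _ _ j hE hj using fun n ↦ exists_injective_linearMap_to_injective (R := R) (R ⧸ I n)
  let f (n : ℕ) : (⨆ k, I k : Ideal R) →ₗ[R] E n := j n ∘ₗ (I n).mkQ ∘ₗ Submodule.subtype _
  have hf (n : ℕ) (r : (⨆ k, I k : Ideal R)) : f n r = 0 ↔ (r : R) ∈ I n :=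
    (map_eq_zero_iff (j n) (hj n)).trans (Submodule.Quotient.mk_eq_zero _)
  obtain ⟨g, hg⟩ := exists_directSum_lift f fun r ↦ by
    obtain ⟨N, hN⟩ := (Submodule.mem_iSup_of_directed I I.monotone.directed_le).1 r.2
    exact (Set.finite_lt_nat N).subset fun n hn ↦
      lt_of_not_ge fun hNn ↦ hn ((hf n r).2 (I.monotone hNn hN))
  obtain ⟨g', hg'⟩ := Module.Baer.of_injective (H E) _ g
  obtain ⟨N, hN⟩ : ∃ N, ∀ n ≥ N, g' 1 n = 0 := by
    classical
    obtain ⟨N, hN⟩ := (DFinsupp.support (g' 1)).bddAbove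
    exact ⟨N + 1, fun n hn ↦ by_contra fun h ↦
      (hN (DFinsupp.mem_support_iff.2 h)).not_gt hn⟩
  refine ⟨N, fun n hn ↦ le_antisymm (I.monotone hn) fun r hr ↦ ?_⟩
  have hr' := Submodule.mem_iSup_of_mem (p := I) n hr
  rw [← hf N ⟨r, hr'⟩, ← hg, ← hg' r hr', ← mul_one r, ← smul_eq_mul, map_smul,
    DirectSum.smul_apply, hN N le_rfl, smul_zero]

theorem isNoetherianRing_of_forall_injective_iff_flat
    (H : ∀ (E : Type u) [AddCommGroup E] [Module R E],
      Module.Injective R E ↔ Module.Flat R (CharacterModule E)) : IsNoetherianRing R :=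
  isNoetherianRing_of_forall_injective_directSum fun E ↦
    have : Module.Flat R (CharacterModule (∀ n, E n)) := (H _).1 inferInstance
    (H _).2 (flat_characterModule_directSum E)

end BassPapp

section EnvelopeCover

variable {R}
variable {M E : Type u} [AddCommGroup M] [Module R M] [AddCommGroup E] [Module R E]

theorem IsInjectiveEnvelope.isFlatCover_dual [IsNoetherianRing R] {i : M →ₗ[R] E}
    (hi : IsInjectiveEnvelope R i) : IsFlatCover R (dual i) := by
  have hflat := injective_iff_flat_characterModule.1 hi.1
  refine ⟨isFlatPrecover_dual_iff.2 ⟨hi.2.1, hflat⟩, fun h hh ↦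
    bijective_of_forall_map_sub_self_mem hi.2.2 fun c ↦ mem_characterAnnihilator.2 ?_⟩
  rintro _ ⟨m, rfl⟩
  exact sub_eq_zero.2 congr($hh c m)

theorem isInjectiveEnvelope_of_isFlatCover_dual [IsNoetherianRing R] {i : M →ₗ[R] E}
    (h : IsFlatCover R (dual i)) : IsInjectiveEnvelope R i := by
  obtain ⟨hi, hflat⟩ := isFlatPrecover_dual_iff.1 h.1
  have hE := injective_iff_flat_characterModule.2 hflat
  refine ⟨hE, hi, fun N ↦ inf_range_ne_bot_of_forall_injective hi fun f hf ↦ ?_⟩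
  exact (dual_bijective_iff_bijective.1 (h.2 (dual f) (by rw [← dual_comp, hf]))).injective

end EnvelopeCover

/-- A commutative ring `S` is Noetherian iff for every morphism `i` of
`S`-modules, `i` is an injective envelope precisely when the character module dual
`i⁺ = Hom_ℤ(i, ℚ/ℤ)` is a flat cover. -/
theorem isNoetherianRing_iff_injectiveEnvelope_iff_characterDual_flatCover :
    IsNoetherianRing R ↔
      ∀ (M I : Type u) [AddCommGroup M] [AddCommGroup I] [Module R M] [Module R I]
        (i : M →ₗ[R] I),
        (IsInjectiveEnvelope R i ↔ IsFlatCover R (CharacterModule.dual i)) := by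
  refine ⟨fun _ M E _ _ _ _ i ↦ ⟨IsInjectiveEnvelope.isFlatCover_dual,
    isInjectiveEnvelope_of_isFlatCover_dual⟩, fun H ↦ ?_⟩
  refine isNoetherianRing_of_forall_injective_iff_flat fun E _ _ ↦ ?_
  have hid := H E E LinearMap.id
  rwa [dual_id, isInjectiveEnvelope_id_iff, isFlatCover_id_iff] at hid
end
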